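/- arXiv:1709.03218 — 3 statements merged into one kernel-verified Lean document; each statement's English description precedes it below -/
import Mathlib

section
/- Let d = 3. For every integer n ≥ 1 and every k with 0 ≤ k ≤ 2n, a(n,k) = a(n−1,k−2) + 2·(3(n−1)−(k−1))·a(n−1,k−1) + (C(3(n−1)−k, 2) + 2k)·a(n−1,k) + (k+1)·(3(n−1)−(k+1))·a(n−1,k+1) + C(k+2, 2)·a(n−1,k+2), the identity being understood in the integers (whenever an integer coefficient is negative the corresponding a-value is 0). -/
/-- A generalized linear diagram on points `1,…,N` whose blocks all have size `d`:
a partition of `{1,…,N}` into blocks of size `d`. -/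
def IsLinearDiagram (N d : ℕ) (P : Finset (Finset ℕ)) : Prop :=
  (∀ b ∈ P, b.card = d) ∧ (∀ b ∈ P, ∀ x ∈ b, x ∈ Finset.Icc 1 N) ∧
    ∀ x ∈ Finset.Icc 1 N, ∃! b : Finset ℕ, b ∈ P ∧ x ∈ b

/-- The number of loops of a linear diagram on points `1,…,N`: indices `i` with
`1 ≤ i ≤ N - 1` such that `i` and `i + 1` lie in the same block. -/
noncomputable def linLoops (N : ℕ) (P : Finset (Finset ℕ)) : ℕ :=
  Set.ncard {i : ℕ | 1 ≤ i ∧ i + 1 ≤ N ∧ ∃ b ∈ P, i ∈ b ∧ i + 1 ∈ b}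

/-- `numA d n k` : the number of generalized linear diagrams of order `(n,d)`
with exactly `k` loops. -/
noncomputable def numA (d n k : ℕ) : ℕ :=
  Set.ncard {P : Finset (Finset ℕ) | IsLinearDiagram (n * d) d P ∧ linLoops (n * d) P = k}

/-- `numA` with an integer loop index, zero for negative indices. -/
noncomputable def numAZ (d n : ℕ) (k : ℤ) : ℕ :=
  if 0 ≤ k then numA d n k.toNat else 0

/-- Binomial coefficient with integer arguments: `0` when `y < 0` or `y > x`. -/
def iChoose (x y : ℤ) : ℕ :=
  if 0 ≤ y ∧ y ≤ x then x.toNat.choose y.toNat else 0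

/-- A generalized chord diagram on `ZMod N` whose blocks all have size `d`:
a partition of `ZMod N` into blocks of size `d`. -/
def IsChordDiagram (N d : ℕ) (P : Finset (Finset (ZMod N))) : Prop :=
  (∀ b ∈ P, b.card = d) ∧ ∀ x : ZMod N, ∃! b : Finset (ZMod N), b ∈ P ∧ x ∈ b

/-- A chord diagram is loopless if no residues `i`, `i+1` lie in the same block. -/
def ChordLoopless (N : ℕ) (P : Finset (Finset (ZMod N))) : Prop :=
  ∀ i : ZMod N, ∀ b ∈ P, i ∈ b → i + 1 ∈ b → False

/-- `numB d n` : the number of loopless generalized chord diagrams of order `(n,d)`. -/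
noncomputable def numB (d n : ℕ) : ℕ :=
  Set.ncard {P : Finset (Finset (ZMod (n * d))) |
    IsChordDiagram (n * d) d P ∧ ChordLoopless (n * d) P}

/-- The shift `i ↦ i + v` modulo `M`, on the representatives `1,…,M`. -/
def shiftMod (M v i : ℕ) : ℕ := if i + v ≤ M then i + v else i + v - M

/-- An `m`-symmetric linear diagram with sector size `v` and blocks of size `d`:
a partition of `{1,…,m·v}` into blocks of size `d` invariant under the shift by `v`
modulo `m·v`. -/
def IsMSymLinear (d m v : ℕ) (P : Finset (Finset ℕ)) : Prop :=
  IsLinearDiagram (m * v) d P ∧ ∀ b ∈ P, b.image (shiftMod (m * v) v) ∈ P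

/-- The number of loops lying in sector `s` (sectors numbered from `0`):
indices `i` with `s·v + 1 ≤ i ≤ (s+1)·v - 1` such that `i` and `i + 1` lie
in the same block. -/
noncomputable def sectorLoops (v : ℕ) (P : Finset (Finset ℕ)) (s : ℕ) : ℕ :=
  Set.ncard {i : ℕ | s * v + 1 ≤ i ∧ i + 1 ≤ (s + 1) * v ∧ ∃ b ∈ P, i ∈ b ∧ i + 1 ∈ b}

/-- `numAtil d m v k` : the number of `m`-symmetric linear diagrams with sector size `v`,
blocks of size `d`, and exactly `k` loops in each sector (`ã(v,k;m,d)`). -/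
noncomputable def numAtil (d m v k : ℕ) : ℕ :=
  Set.ncard {P : Finset (Finset ℕ) |
    IsMSymLinear d m v P ∧ ∀ s < m, sectorLoops v P s = k}
namespace LR

open Finset

def phi (p q i : ℕ) : ℕ := if i ≤ p then i else if i ≤ q then i + 1 else i + 2

def psi (p q i : ℕ) : ℕ := if i ≤ p then i else if i ≤ q + 1 then i - 1 else i - 2

lemma phi_inj {p q : ℕ} (h : p ≤ q) : Function.Injective (phi p q) := by
  intro a b hab
  unfold phi at hab
  split_ifs at hab <;> omega

lemma psi_phi {p q : ℕ} (h : p ≤ q) (i : ℕ) : psi p q (phi p q i) = i := by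
  unfold phi psi
  split_ifs <;> omega

lemma phi_psi {p q : ℕ} (h : p ≤ q) (i : ℕ) (h1 : i ≠ p + 1) (h2 : i ≠ q + 2) :
    phi p q (psi p q i) = i := by
  unfold phi psi
  split_ifs <;> omega

lemma phi_ne1 {p q : ℕ} (h : p ≤ q) (i : ℕ) : phi p q i ≠ p + 1 := by
  unfold phi
  split_ifs <;> omega

lemma phi_ne2 {p q : ℕ} (h : p ≤ q) (i : ℕ) : phi p q i ≠ q + 2 := by
  unfold phi
  split_ifs <;> omega

lemma phi_mem {p q M : ℕ} (h : p ≤ q) (hM : q ≤ M) (i : ℕ) (hi : i ∈ Icc 1 M) :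
    phi p q i ∈ Icc 1 (M + 2) := by
  rw [mem_Icc] at *
  unfold phi
  split_ifs <;> omega

lemma psi_mem {p q M : ℕ} (h : p ≤ q) (hM : q ≤ M) (i : ℕ) (hi : i ∈ Icc 1 (M + 2))
    (h1 : i ≠ p + 1) (h2 : i ≠ q + 2) : psi p q i ∈ Icc 1 M := by
  rw [mem_Icc] at *
  unfold psi
  split_ifs <;> omega

/-- insertion of a new block -/
def ins (M : ℕ) (P : Finset (Finset ℕ)) (p q : ℕ) : Finset (Finset ℕ) :=
  insert {p + 1, q + 2, M + 3} (P.image (fun b => b.image (phi p q)))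

lemma ins_mem {M p q : ℕ} {P : Finset (Finset ℕ)} (hP : IsLinearDiagram M 3 P)
    (h : p ≤ q) (hM : q ≤ M) : IsLinearDiagram (M + 3) 3 (ins M P p q) := by
  obtain ⟨hc, hr, hu⟩ := hP
  refine ⟨?_, ?_, ?_⟩
  · intro b hb
    simp only [ins, mem_insert, mem_image] at hb
    rcases hb with rfl | ⟨c, hcP, rfl⟩
    · rw [card_eq_three]
      exact ⟨p + 1, q + 2, M + 3, by omega, by omega, by omega, rfl⟩
    · rw [card_image_of_injective _ (phi_inj h)]
      exact hc c hcP
  · intro b hb x hx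
    simp only [ins, mem_insert, mem_image] at hb
    rcases hb with rfl | ⟨c, hcP, rfl⟩
    · simp only [mem_insert, mem_singleton] at hx
      rw [mem_Icc]
      omega
    · obtain ⟨y, hy, rfl⟩ := mem_image.1 hx
      have := phi_mem h hM y (hr c hcP y hy)
      rw [mem_Icc] at *
      omega
  · intro x hx
    by_cases hx' : x = p + 1 ∨ x = q + 2 ∨ x = M + 3
    · refine ⟨{p + 1, q + 2, M + 3}, ⟨by simp [ins], by simpa using hx'⟩, ?_⟩
      rintro b ⟨hb, hxb⟩
      simp only [ins, mem_insert, mem_image] at hb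
      rcases hb with rfl | ⟨c, hcP, rfl⟩
      · rfl
      · exfalso
        obtain ⟨y, hy, rfl⟩ := mem_image.1 hxb
        have h1 := phi_mem h hM y (hr c hcP y hy)
        have h2 := phi_ne1 h y
        have h3 := phi_ne2 h y
        rw [mem_Icc] at h1
        omega
    · push Not at hx'
      obtain ⟨h1, h2, h3⟩ := hx'
      have hx2 : x ∈ Icc 1 (M + 2) := by
        rw [mem_Icc] at *
        omega
      obtain ⟨c, ⟨hcP, hxc⟩, huc⟩ := hu (psi p q x) (psi_mem h hM x hx2 h1 h2)
      refine ⟨c.image (phi p q), ⟨?_, ?_⟩, ?_⟩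
      · simp only [ins, mem_insert, mem_image]
        exact Or.inr ⟨c, hcP, rfl⟩
      · exact mem_image.2 ⟨_, hxc, phi_psi h x h1 h2⟩
      · rintro b ⟨hb, hxb⟩
        simp only [ins, mem_insert, mem_image] at hb
        rcases hb with rfl | ⟨c', hcP', rfl⟩
        · simp only [mem_insert, mem_singleton] at hxb
          omega
        · obtain ⟨y, hy, rfl⟩ := mem_image.1 hxb
          rw [psi_phi h] at huc
          rw [huc c' ⟨hcP', hy⟩]

lemma blk_notMem {M p q : ℕ} {P : Finset (Finset ℕ)} (h : p ≤ q) :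
    ({p + 1, q + 2, M + 3} : Finset ℕ) ∉ P.image (fun b => b.image (phi p q)) := by
  intro hb
  obtain ⟨c, _, hc⟩ := mem_image.1 hb
  have : p + 1 ∈ c.image (phi p q) := by simp only [hc]; simp
  obtain ⟨y, _, hy⟩ := mem_image.1 this
  exact phi_ne1 h y hy

lemma uniq {N d : ℕ} {P : Finset (Finset ℕ)} (hP : IsLinearDiagram N d P) {b c : Finset ℕ}
    {x : ℕ} (hb : b ∈ P) (hc : c ∈ P) (hxb : x ∈ b) (hxc : x ∈ c) : b = c :=
  (hP.2.2 x (hP.2.1 b hb x hxb)).unique ⟨hb, hxb⟩ ⟨hc, hxc⟩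

lemma ins_inj {M p q p' q' : ℕ} {P P' : Finset (Finset ℕ)} (hP : IsLinearDiagram M 3 P)
    (h : p ≤ q) (hM : q ≤ M) (h' : p' ≤ q') (hM' : q' ≤ M)
    (he : ins M P p q = ins M P' p' q') : P = P' ∧ p = p' ∧ q = q' := by
  have hD := ins_mem hP h hM
  have hbb : ({p + 1, q + 2, M + 3} : Finset ℕ) = {p' + 1, q' + 2, M + 3} := by
    refine uniq hD (x := M + 3) (by simp [ins]) (by rw [he]; simp [ins]) (by simp) (by simp)
  have e1 : p + 1 ∈ ({p' + 1, q' + 2, M + 3} : Finset ℕ) := by rw [← hbb]; simp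
  have e2 : q + 2 ∈ ({p' + 1, q' + 2, M + 3} : Finset ℕ) := by rw [← hbb]; simp
  have e3 : p' + 1 ∈ ({p + 1, q + 2, M + 3} : Finset ℕ) := by rw [hbb]; simp
  have e4 : q' + 2 ∈ ({p + 1, q + 2, M + 3} : Finset ℕ) := by rw [hbb]; simp
  simp only [mem_insert, mem_singleton] at e1 e2 e3 e4
  have hp : p = p' := by omega
  have hq : q = q' := by omega
  subst hp hq
  refine ⟨?_, rfl, rfl⟩
  have := congrArg (fun s => s.erase {p + 1, q + 2, M + 3}) he
  simp only [ins] at this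
  rw [erase_insert (blk_notMem h), erase_insert (blk_notMem h)] at this
  exact image_injective (image_injective (phi_inj h)) this

lemma ins_surj {M : ℕ} {P : Finset (Finset ℕ)} (hP : IsLinearDiagram (M + 3) 3 P) :
    ∃ P' p q, IsLinearDiagram M 3 P' ∧ p ≤ q ∧ q ≤ M ∧ ins M P' p q = P := by
  obtain ⟨b, ⟨hb, hxb⟩, -⟩ := hP.2.2 (M + 3) (by rw [mem_Icc]; omega)
  have hcard : (b.erase (M + 3)).card = 2 := by
    rw [card_erase_of_mem hxb, hP.1 b hb]
  obtain ⟨x, y, hxy, hbe⟩ : ∃ x y, x < y ∧ b.erase (M + 3) = {x, y} := by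
    obtain ⟨x, y, hne, hbe⟩ := card_eq_two.1 hcard
    rcases lt_or_gt_of_ne hne with hl | hl
    · exact ⟨x, y, hl, hbe⟩
    · exact ⟨y, x, hl, by rw [hbe, pair_comm]⟩
  have hx : x ∈ b.erase (M + 3) := by rw [hbe]; simp
  have hy : y ∈ b.erase (M + 3) := by rw [hbe]; simp
  have hx1 := hP.2.1 b hb x (mem_of_mem_erase hx)
  have hy1 := hP.2.1 b hb y (mem_of_mem_erase hy)
  have hx2 := ne_of_mem_erase hx
  have hy2 := ne_of_mem_erase hy
  rw [mem_Icc] at hx1 hy1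
  obtain ⟨p, rfl⟩ : ∃ p, x = p + 1 := ⟨x - 1, by omega⟩
  obtain ⟨q, rfl⟩ : ∃ q, y = q + 2 := ⟨y - 2, by omega⟩
  have h : p ≤ q := by omega
  have hM : q ≤ M := by omega
  have hbeq : b = {p + 1, q + 2, M + 3} := by
    rw [← insert_erase hxb, hbe]
    ext z
    simp only [mem_insert, mem_singleton]
    tauto
  have hother : ∀ c ∈ P.erase b, ∀ z ∈ c, z ≠ p + 1 ∧ z ≠ q + 2 ∧ z ∈ Icc 1 (M + 2) := by
    intro c hc z hz
    have hcP := mem_of_mem_erase hc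
    have hcb := ne_of_mem_erase hc
    have hzb : z ∉ b := fun hzb => hcb (uniq hP hcP hb hz hzb)
    rw [hbeq] at hzb
    simp only [mem_insert, mem_singleton, not_or] at hzb
    have := hP.2.1 c hcP z hz
    rw [mem_Icc] at *
    omega
  have hpp : ∀ c ∈ P.erase b, (c.image (psi p q)).image (phi p q) = c := by
    intro c hc
    rw [image_image]
    conv_rhs => rw [← image_id (s := c)]
    apply image_congr
    intro z hz
    obtain ⟨h1, h2, _⟩ := hother c hc z hz
    exact phi_psi h z h1 h2
  refine ⟨(P.erase b).image (fun c => c.image (psi p q)), p, q, ⟨?_, ?_, ?_⟩, h, hM, ?_⟩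
  · intro c' hc'
    obtain ⟨c, hc, rfl⟩ := mem_image.1 hc'
    rw [← card_image_of_injective _ (phi_inj h), hpp c hc]
    exact hP.1 c (mem_of_mem_erase hc)
  · intro c' hc' w hw
    obtain ⟨c, hc, rfl⟩ := mem_image.1 hc'
    obtain ⟨z, hz, rfl⟩ := mem_image.1 hw
    obtain ⟨h1, h2, h3⟩ := hother c hc z hz
    exact psi_mem h hM z h3 h1 h2
  · intro w hw
    have hw' := phi_mem h hM w hw
    obtain ⟨c, ⟨hcP, hwc⟩, -⟩ := hP.2.2 (phi p q w) (by rw [mem_Icc] at *; omega)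
    have hcb : c ≠ b := by
      rintro rfl
      rw [hbeq] at hwc
      simp only [mem_insert, mem_singleton] at hwc
      have h2 := phi_ne1 h w
      have h3 := phi_ne2 h w
      rw [mem_Icc] at hw'
      omega
    refine ⟨c.image (psi p q), ⟨mem_image.2 ⟨c, mem_erase.2 ⟨hcb, hcP⟩, rfl⟩,
      mem_image.2 ⟨_, hwc, psi_phi h w⟩⟩, ?_⟩
    rintro e ⟨he, hwe⟩
    obtain ⟨c', hc', rfl⟩ := mem_image.1 he
    obtain ⟨z, hz, rfl⟩ := mem_image.1 hwe
    obtain ⟨h1, h2, h3⟩ := hother c' hc' z hz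
    rw [phi_psi h z h1 h2] at hwc
    rw [uniq hP (mem_of_mem_erase hc') hcP hz hwc]
  · unfold ins
    rw [image_image, ← hbeq]
    have : (P.erase b).image ((fun b => b.image (phi p q)) ∘ fun c => c.image (psi p q))
        = P.erase b := by
      conv_rhs => rw [← image_id (s := P.erase b)]
      apply image_congr
      intro c hc
      exact hpp c hc
    rw [this, insert_erase hb]

open Classical in
/-- the set of loops -/
noncomputable def lset (N : ℕ) (P : Finset (Finset ℕ)) : Finset ℕ :=
  (range N).filter (fun i => 1 ≤ i ∧ i + 1 ≤ N ∧ ∃ b ∈ P, i ∈ b ∧ i + 1 ∈ b)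

lemma linLoops_eq (N : ℕ) (P : Finset (Finset ℕ)) : linLoops N P = (lset N P).card := by
  unfold linLoops
  rw [← Set.ncard_coe_finset]
  congr 1
  ext i
  simp only [lset, Set.mem_ofPred_eq, coe_filter, mem_range]
  constructor
  · intro h; exact ⟨by omega, h⟩
  · intro h; exact h.2

lemma mem_lset (N : ℕ) (P : Finset (Finset ℕ)) (i : ℕ) : i ∈ lset N P ↔
    i < N ∧ 1 ≤ i ∧ i + 1 ≤ N ∧ ∃ b ∈ P, i ∈ b ∧ i + 1 ∈ b := by
  unfold lset
  rw [mem_filter, mem_range]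

lemma lset_sub (N : ℕ) (P : Finset (Finset ℕ)) : lset N P ⊆ range N := filter_subset _ _

lemma lset_ins {M p q : ℕ} {P : Finset (Finset ℕ)} (hP : IsLinearDiagram M 3 P)
    (h : p ≤ q) (hM : q ≤ M) :
    lset (M + 3) (ins M P p q) = ((lset M P) \ {p, q}).image (phi p q) ∪
      ((if p = q then {p + 1} else ∅) ∪ (if q = M then {q + 2} else ∅)) := by
  ext i
  have hif : i ∈ ((if p = q then {p + 1} else ∅ : Finset ℕ) ∪ (if q = M then {q + 2} else ∅))
      ↔ (p = q ∧ i = p + 1) ∨ (q = M ∧ i = q + 2) := by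
    split_ifs <;> simp_all
  rw [mem_union, hif]
  simp only [mem_lset, mem_image, mem_sdiff, mem_insert, mem_singleton, ins]
  constructor
  · rintro ⟨-, h1, h2, b, hb | ⟨c, hc, rfl⟩, hi, hi1⟩
    · subst hb
      simp only [mem_insert, mem_singleton] at hi hi1
      right
      omega
    · left
      obtain ⟨z, hz, rfl⟩ := mem_image.1 hi
      obtain ⟨w, hw, hzw⟩ := mem_image.1 hi1
      have hz' := hP.2.1 c hc z hz
      have hw' := hP.2.1 c hc w hw
      rw [mem_Icc] at hz' hw'
      have : w = z + 1 ∧ z ≠ p ∧ z ≠ q := by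
        unfold phi at hzw
        split_ifs at hzw <;> omega
      obtain ⟨rfl, h3, h4⟩ := this
      exact ⟨z, ⟨⟨by omega, by omega, by omega, c, hc, hz, hw⟩, by omega⟩, rfl⟩
  · rintro (⟨z, ⟨⟨h1, h2, h3, c, hc, hz, hz1⟩, h4⟩, rfl⟩ | hh)
    · have e : phi p q (z + 1) = phi p q z + 1 := by
        unfold phi
        split_ifs <;> omega
      have hz' := phi_mem h hM z (hP.2.1 c hc z hz)
      rw [mem_Icc] at hz'
      refine ⟨by omega, by omega, by omega, _, Or.inr ⟨c, hc, rfl⟩, mem_image_of_mem _ hz, ?_⟩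
      rw [← e]
      exact mem_image_of_mem _ hz1
    · refine ⟨by omega, by omega, by omega, _, Or.inl rfl, ?_, ?_⟩ <;>
      · simp only [mem_insert, mem_singleton]
        omega

lemma card_lset_ins {M p q : ℕ} {P : Finset (Finset ℕ)} (hP : IsLinearDiagram M 3 P)
    (h : p ≤ q) (hM : q ≤ M) :
    (lset (M + 3) (ins M P p q)).card = ((lset M P) \ {p, q}).card +
      ((if p = q then 1 else 0) + (if q = M then 1 else 0)) := by
  rw [lset_ins hP h hM, card_union_of_disjoint, card_image_of_injective _ (phi_inj h),
    card_union_of_disjoint]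
  · congr 2 <;> split_ifs <;> simp
  · split_ifs <;> simp
    omega
  · rw [disjoint_left]
    intro a ha hb
    obtain ⟨z, _, rfl⟩ := mem_image.1 ha
    have h2 := phi_ne1 h z
    have h3 := phi_ne2 h z
    split_ifs at hb <;> simp_all

/-! counting -/

def up (A : Finset ℕ) : Finset (ℕ × ℕ) := (A ×ˢ A).filter (fun x => x.1 < x.2)

lemma card_up (A : Finset ℕ) : (up A).card = A.card.choose 2 := by
  have h1 : A.offDiag = up A ∪ (up A).image Prod.swap := by
    ext ⟨x, y⟩
    simp only [up, mem_offDiag, mem_union, mem_image, mem_filter, mem_product, Prod.exists,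
      Prod.swap_prod_mk, Prod.mk.injEq]
    constructor
    · rintro ⟨hx, hy, hne⟩
      rcases lt_or_gt_of_ne hne with hl | hl
      · exact Or.inl ⟨⟨hx, hy⟩, hl⟩
      · exact Or.inr ⟨y, x, ⟨⟨hy, hx⟩, hl⟩, rfl, rfl⟩
    · rintro (⟨⟨hx, hy⟩, hl⟩ | ⟨a, b, ⟨⟨hx, hy⟩, hl⟩, rfl, rfl⟩)
      · exact ⟨hx, hy, by omega⟩
      · exact ⟨hy, hx, by omega⟩
  have h2 : A.offDiag.card = (up A).card + (up A).card := by
    rw [h1, card_union_of_disjoint, card_image_of_injective _ Prod.swap_injective]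
    rw [disjoint_left]
    rintro ⟨x, y⟩ ha hb
    simp only [up, mem_image, mem_filter, mem_product, Prod.exists,
      Prod.swap_prod_mk, Prod.mk.injEq] at ha hb
    obtain ⟨a, b, h, rfl, rfl⟩ := hb
    omega
  rw [offDiag_card] at h2
  rw [Nat.choose_two_right, Nat.mul_sub, mul_one]
  omega

/-- gap pairs -/
def prs (M : ℕ) : Finset (ℕ × ℕ) :=
  (range (M + 1) ×ˢ range (M + 1)).filter (fun x => x.1 ≤ x.2)

lemma mem_prs (M p q : ℕ) : (p, q) ∈ prs M ↔ p ≤ q ∧ q ≤ M := by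
  simp only [prs, mem_filter, mem_product, mem_range]
  omega

lemma prs_split (M : ℕ) (f : ℕ → ℕ → ℕ) : ∑ x ∈ prs M, f x.1 x.2 =
    f M M + ∑ p ∈ range M, f p M + ∑ p ∈ range M, f p p + ∑ x ∈ up (range M), f x.1 x.2 := by
  have : prs M = (({(M, M)} ∪ (range M).image (fun p => (p, M))) ∪
      (range M).image (fun p => (p, p))) ∪ up (range M) := by
    ext ⟨x, y⟩
    simp only [mem_prs, up, mem_union, mem_image, mem_filter, mem_product, mem_singleton,
      Prod.mk.injEq, mem_range]
    constructor
    · rintro ⟨h1, h2⟩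
      by_cases e1 : x = y
      · by_cases e2 : y = M
        · left; left; left; omega
        · left; right; exact ⟨x, by omega, rfl, e1⟩
      · by_cases e2 : y = M
        · left; left; right; exact ⟨x, by omega, rfl, e2.symm⟩
        · right; omega
    · rintro (((h | ⟨a, h, rfl, rfl⟩) | ⟨a, h, rfl, rfl⟩) | h) <;> omega
  rw [this, sum_union, sum_union, sum_union, sum_singleton, sum_image, sum_image]
  · intro a _ b _ h; simpa using h
  · intro a _ b _ h; simpa using h
  all_goals
    rw [disjoint_left]
    rintro ⟨x, y⟩ ha hb
    simp only [up, mem_union, mem_image, mem_filter, mem_product, mem_singleton,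
      Prod.mk.injEq, mem_range] at ha hb
    grind

set_option maxHeartbeats 1000000 in
lemma count {M k : ℕ} {L : Finset ℕ} (hL : L ⊆ range M) :
    ((prs M).filter (fun x => (L \ {x.1, x.2}).card +
      ((if x.1 = x.2 then 1 else 0) + (if x.2 = M then 1 else 0)) = k)).card =
    (if L.card + 2 = k then 1 else 0) + 2 * (if L.card + 1 = k then M - L.card else 0) +
      (if L.card = k then (M - L.card).choose 2 + 2 * L.card else 0) +
      (if L.card = k + 1 then L.card * (M - L.card) else 0) +
      (if L.card = k + 2 then L.card.choose 2 else 0) := by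
  have hle : L.card ≤ M := by simpa using card_le_card hL
  have hcM : (range M \ L).card = M - L.card := by rw [card_sdiff_of_subset hL, card_range]
  have hMn : M ∉ L := fun h => by simpa using hL h
  rw [card_filter, prs_split M (fun p q => if (L \ {p, q}).card +
      ((if p = q then 1 else 0) + (if q = M then 1 else 0)) = k then 1 else 0)]
  -- cardinalities
  have c1 : ∀ p, (L \ {p, M}).card = L.card - if p ∈ L then 1 else 0 := by
    intro p
    have : L \ {p, M} = L.erase p := by
      ext z
      simp only [mem_sdiff, mem_insert, mem_singleton, mem_erase]
      constructor
      · tauto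
      · rintro ⟨h1, h2⟩
        refine ⟨h2, ?_⟩
        rintro (h | h)
        · exact h1 h
        · exact hMn (h ▸ h2)
    rw [this, card_erase_eq_ite]
    split_ifs <;> rfl
  have c2 : ∀ p, (L \ {p, p}).card = L.card - if p ∈ L then 1 else 0 := by
    intro p
    rw [pair_eq_singleton, sdiff_singleton_eq_erase, card_erase_eq_ite]
    split_ifs <;> rfl
  have c3 : ∀ p q, p < q → (L \ {p, q}).card =
      L.card - ((if p ∈ L then 1 else 0) + if q ∈ L then 1 else 0) := by
    intro p q hpq
    have : L \ {p, q} = (L.erase p).erase q := by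
      ext z
      simp only [mem_sdiff, mem_insert, mem_singleton, mem_erase]
      tauto
    rw [this, card_erase_eq_ite, card_erase_eq_ite]
    have : q ∈ L.erase p ↔ q ∈ L := by
      rw [mem_erase]
      constructor
      · tauto
      · intro h; exact ⟨by omega, h⟩
    simp only [this]
    split_ifs <;> omega
  have c4 : ∀ p ∈ L, 1 ≤ L.card := fun p hp => card_pos.2 ⟨p, hp⟩
  have c5 : ∀ p q, p < q → p ∈ L → q ∈ L → 2 ≤ L.card := by
    intro p q hpq hp hq
    have : ({p, q} : Finset ℕ) ⊆ L := by
      intro z hz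
      simp only [mem_insert, mem_singleton] at hz
      rcases hz with rfl | rfl <;> assumption
    have h2 := card_le_card this
    rwa [card_pair (by omega)] at h2
  have key : ∀ g : ℕ → ℕ, (∀ p ∈ range M, g p = if p ∈ L then (if L.card = k then 1 else 0)
      else (if L.card + 1 = k then 1 else 0)) → ∑ p ∈ range M, g p =
      (if L.card = k then L.card else 0) + (if L.card + 1 = k then M - L.card else 0) := by
    intro g hg
    rw [← sum_sdiff hL]
    rw [sum_congr rfl (g := fun _ => if L.card + 1 = k then 1 else 0) (s₁ := range M \ L),
      sum_congr rfl (g := fun _ => if L.card = k then 1 else 0) (s₁ := L)]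
    · rw [sum_const, sum_const, hcM]
      split_ifs <;> simp <;> omega
    · intro x hx
      rw [hg x (hL hx), if_pos hx]
    · intro x hx
      rw [mem_sdiff] at hx
      rw [hg x hx.1, if_neg hx.2]
  have s1 : ∑ p ∈ range M, (if (L \ {p, M}).card +
      ((if p = M then 1 else 0) + (if M = M then 1 else 0)) = k then 1 else 0) =
      (if L.card = k then L.card else 0) + (if L.card + 1 = k then M - L.card else 0) := by
    apply key
    intro p hp
    rw [mem_range] at hp
    rw [c1, if_neg (show p ≠ M by omega)]
    have := c4 p
    split_ifs <;> first | rfl | (exfalso; simp_all; done) | (exfalso; simp_all; omega) | omega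
  have s2 : ∑ p ∈ range M, (if (L \ {p, p}).card +
      ((if p = p then 1 else 0) + (if p = M then 1 else 0)) = k then 1 else 0) =
      (if L.card = k then L.card else 0) + (if L.card + 1 = k then M - L.card else 0) := by
    apply key
    intro p hp
    rw [mem_range] at hp
    rw [c2, if_neg (show p ≠ M by omega)]
    have := c4 p
    split_ifs <;> first | rfl | (exfalso; simp_all; done) | (exfalso; simp_all; omega) | omega
  have hsplit : up (range M) = (up L ∪ up (range M \ L)) ∪
      (up (range M)).filter (fun x => ¬ (x.1 ∈ L ↔ x.2 ∈ L)) := by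
    ext ⟨x, y⟩
    have hx := @hL x
    have hy := @hL y
    simp only [up, mem_union, mem_filter, mem_product, mem_sdiff]
    tauto
  have dj1 : Disjoint (up L) (up (range M \ L)) := by
    rw [disjoint_left]
    rintro ⟨x, y⟩ ha hb
    simp only [up, mem_filter, mem_product, mem_sdiff] at ha hb
    tauto
  have dj2 : Disjoint (up L ∪ up (range M \ L))
      ((up (range M)).filter (fun x => ¬ (x.1 ∈ L ↔ x.2 ∈ L))) := by
    rw [disjoint_left]
    rintro ⟨x, y⟩ ha hb
    simp only [up, mem_filter, mem_product, mem_sdiff, mem_union] at ha hb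
    tauto
  have cmix : ((up (range M)).filter (fun x => ¬ (x.1 ∈ L ↔ x.2 ∈ L))).card =
      L.card * (M - L.card) := by
    have h0 := congrArg Finset.card hsplit
    rw [card_union_of_disjoint dj2, card_union_of_disjoint dj1, card_up, card_up, card_up, hcM,
      card_range] at h0
    obtain ⟨m, hm⟩ := Nat.exists_eq_add_of_le hle
    rw [hm, Nat.add_sub_cancel_left] at h0 ⊢
    have h1 : ((L.card + m).choose 2 : ℚ) = L.card.choose 2 + m.choose 2 + L.card * m := by
      rw [Nat.cast_choose_two, Nat.cast_choose_two, Nat.cast_choose_two]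
      push_cast
      ring
    have h2 : (L.card + m).choose 2 = L.card.choose 2 + m.choose 2 + L.card * m := by
      exact_mod_cast h1
    rw [hm] at *
    omega
  have s3 : ∑ x ∈ up (range M), (if (L \ {x.1, x.2}).card +
      ((if x.1 = x.2 then 1 else 0) + (if x.2 = M then 1 else 0)) = k then 1 else 0) =
      (if L.card = k + 2 then L.card.choose 2 else 0) +
      (if L.card = k then (M - L.card).choose 2 else 0) +
      (if L.card = k + 1 then L.card * (M - L.card) else 0) := by
    have hg : ∀ x ∈ up (range M), (if (L \ {x.1, x.2}).card +
      ((if x.1 = x.2 then 1 else 0) + (if x.2 = M then 1 else 0)) = k then 1 else 0) =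
      (if L.card = k + ((if x.1 ∈ L then 1 else 0) + if x.2 ∈ L then 1 else 0) then 1 else 0) := by
      rintro ⟨x, y⟩ hx
      simp only [up, mem_filter, mem_product, mem_range] at hx ⊢
      rw [c3 _ _ hx.2, if_neg (show x ≠ y by omega), if_neg (show y ≠ M by omega)]
      have e1 := c4 x
      have e2 := c4 y
      have e3 := c5 x y hx.2
      congr 1
      apply propext
      split_ifs with i1 i2 i2
      · have := e3 i1 i2; omega
      · have := e1 i1; omega
      · have := e2 i2; omega
      · omega
    rw [sum_congr rfl hg, hsplit, sum_union dj2, sum_union dj1]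
    rw [sum_congr rfl (g := fun _ => if L.card = k + 2 then 1 else 0) (s₁ := up L),
      sum_congr rfl (g := fun _ => if L.card = k then 1 else 0) (s₁ := up (range M \ L)),
      sum_congr rfl (g := fun _ => if L.card = k + 1 then 1 else 0) (s₁ := filter _ _)]
    · rw [sum_const, sum_const, sum_const, cmix, card_up, card_up, hcM]
      split_ifs <;> simp
    · rintro ⟨x, y⟩ hx
      simp only [mem_filter] at hx
      have hx2 := hx.2
      clear * - hx2
      by_cases i1 : x ∈ L <;> by_cases i2 : y ∈ L <;> simp [i1, i2] at hx2 ⊢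
    · rintro ⟨x, y⟩ hx
      simp only [up, mem_filter, mem_product, mem_sdiff] at hx
      simp [hx.1.1.2, hx.1.2.2]
    · rintro ⟨x, y⟩ hx
      simp only [up, mem_filter, mem_product] at hx
      simp [hx.1.1, hx.1.2]
  rw [s1, s2, s3, c1, if_neg hMn]
  simp only [if_true, Nat.sub_zero]
  split_ifs <;> omega

open Classical in
/-- all diagrams -/
noncomputable def dia (M : ℕ) : Finset (Finset (Finset ℕ)) :=
  ((Icc 1 M).powerset.powerset).filter (fun P => IsLinearDiagram M 3 P)

lemma mem_dia (M : ℕ) (P : Finset (Finset ℕ)) : P ∈ dia M ↔ IsLinearDiagram M 3 P := by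
  simp only [dia, mem_filter, mem_powerset, and_iff_right_iff_imp]
  intro hP b hb
  rw [mem_powerset]
  intro x hx
  exact hP.2.1 b hb x hx

lemma numA_eq (n k : ℕ) :
    numA 3 n k = ((dia (n * 3)).filter (fun P => (lset (n * 3) P).card = k)).card := by
  unfold numA
  rw [← Set.ncard_coe_finset]
  congr 1
  ext P
  simp [mem_dia, linLoops_eq]

lemma card_step (M k : ℕ) :
    ((dia (M + 3)).filter (fun P => (lset (M + 3) P).card = k)).card =
    ∑ P ∈ dia M, ((prs M).filter (fun x => (lset M P \ {x.1, x.2}).card +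
      ((if x.1 = x.2 then 1 else 0) + (if x.2 = M then 1 else 0)) = k)).card := by
  rw [← card_sigma]
  symm
  apply card_bij (fun a _ => ins M a.1 a.2.1 a.2.2)
  · rintro ⟨P, p, q⟩ ha
    simp only [mem_sigma, mem_filter, mem_dia, mem_prs] at ha ⊢
    obtain ⟨hP, ⟨h, hM⟩, hk⟩ := ha
    exact ⟨ins_mem hP h hM, by rw [card_lset_ins hP h hM, hk]⟩
  · rintro ⟨P, p, q⟩ ha ⟨P', p', q'⟩ ha' he
    simp only [mem_sigma, mem_filter, mem_dia, mem_prs] at ha ha' he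
    obtain ⟨hP, ⟨h, hM⟩, hk⟩ := ha
    obtain ⟨hP', ⟨h', hM'⟩, hk'⟩ := ha'
    obtain ⟨rfl, rfl, rfl⟩ := ins_inj hP h hM h' hM' he
    rfl
  · intro Q hQ
    simp only [mem_filter, mem_dia] at hQ
    obtain ⟨P, p, q, hP, h, hM, rfl⟩ := ins_surj hQ.1
    refine ⟨⟨P, p, q⟩, ?_, rfl⟩
    simp only [mem_sigma, mem_filter, mem_dia, mem_prs]
    exact ⟨hP, ⟨h, hM⟩, by rw [← card_lset_ins hP h hM, hQ.2]⟩

lemma sum_ind (m j : ℕ) (f : ℕ → ℤ) :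
    ∑ P ∈ dia (m * 3), (if (lset (m * 3) P).card = j then f (lset (m * 3) P).card else 0) =
    f j * numA 3 m j := by
  rw [numA_eq, ← sum_filter, sum_congr rfl (g := fun _ => f j)]
  · rw [sum_const, nsmul_eq_mul, mul_comm]
  · intro P hP
    rw [(mem_filter.1 hP).2]

lemma numAZ_nat (m : ℕ) (j : ℕ) : numAZ 3 m (j : ℤ) = numA 3 m j := by
  simp [numAZ]

lemma numAZ_neg (m : ℕ) (j : ℤ) (h : j < 0) : numAZ 3 m j = 0 := by
  simp [numAZ, h]

lemma iChoose_two (a b : ℕ) : iChoose ((a : ℤ) - b) 2 = (a - b).choose 2 := by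
  unfold iChoose
  split_ifs with h
  · congr 1
    omega
  · symm
    apply Nat.choose_eq_zero_of_lt
    omega

lemma sum_ind' (m s k : ℕ) (f : ℕ → ℤ) :
    ∑ P ∈ dia (m * 3), (if (lset (m * 3) P).card + s = k then f (lset (m * 3) P).card else 0) =
    f (k - s) * numAZ 3 m ((k : ℤ) - s) := by
  by_cases h : s ≤ k
  · rw [show (k : ℤ) - s = ((k - s : ℕ) : ℤ) by omega, numAZ_nat, ← sum_ind]
    apply sum_congr rfl
    intro P _
    congr 1
    apply propext
    omega
  · rw [numAZ_neg _ _ (by omega), Nat.cast_zero, mul_zero]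
    apply sum_eq_zero
    intro P _
    rw [if_neg (by omega)]

lemma main (m k : ℕ) : (numA 3 (m + 1) k : ℤ) =
      (numAZ 3 m ((k : ℤ) - 2) : ℤ) +
        2 * (3 * (m : ℤ) - ((k : ℤ) - 1)) * (numAZ 3 m ((k : ℤ) - 1) : ℤ) +
        ((iChoose (3 * (m : ℤ) - (k : ℤ)) 2 : ℤ) + 2 * (k : ℤ)) *
          (numAZ 3 m (k : ℤ) : ℤ) +
        ((k : ℤ) + 1) * (3 * (m : ℤ) - ((k : ℤ) + 1)) *
          (numAZ 3 m ((k : ℤ) + 1) : ℤ) +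
        (iChoose ((k : ℤ) + 2) 2 : ℤ) * (numAZ 3 m ((k : ℤ) + 2) : ℤ) := by
  have t1 := sum_ind' m 2 k (fun _ => 1)
  have t2 := sum_ind' m 1 k (fun l => 2 * (3 * (m : ℤ) - l))
  have t3 := sum_ind m k (fun l => ((m * 3 - l).choose 2 : ℕ) + 2 * (l : ℤ))
  have t4 := sum_ind m (k + 1) (fun l => (l : ℤ) * (3 * (m : ℤ) - l))
  have t5 := sum_ind m (k + 2) (fun l => (l.choose 2 : ℤ))
  have e2 : 2 * (3 * (m : ℤ) - ((k : ℤ) - 1)) * (numAZ 3 m ((k : ℤ) - 1) : ℤ) =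
      2 * (3 * (m : ℤ) - ((k - 1 : ℕ) : ℤ)) * (numAZ 3 m ((k : ℤ) - (1 : ℕ)) : ℤ) := by
    by_cases h : 1 ≤ k
    · rw [Nat.cast_sub h]
      simp
    · rw [numAZ_neg _ _ (by omega), numAZ_neg _ _ (by push_cast; omega)]
      simp
  have e3 : iChoose (3 * (m : ℤ) - (k : ℤ)) 2 = (m * 3 - k).choose 2 := by
    rw [← iChoose_two]
    congr 2
    push_cast
    ring
  have e5 : iChoose ((k : ℤ) + 2) 2 = (k + 2).choose 2 := by
    have := iChoose_two (k + 2) 0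
    simpa using this
  rw [e2, e3, e5, numAZ_nat, show (k : ℤ) + 1 = ((k + 1 : ℕ) : ℤ) by simp,
    show (k : ℤ) + 2 = ((k + 2 : ℕ) : ℤ) by simp, numAZ_nat, numAZ_nat]
  simp only [one_mul] at t1
  rw [show (k : ℤ) - 2 = (k : ℤ) - (2 : ℕ) by simp, ← t1, ← t2, ← t3, ← t4, ← t5]
  rw [numA_eq, show (m + 1) * 3 = m * 3 + 3 by ring, card_step,
    sum_congr rfl (fun P _ => count (lset_sub (m * 3) P))]
  rw [← sum_add_distrib, ← sum_add_distrib, ← sum_add_distrib, ← sum_add_distrib, Nat.cast_sum]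
  apply sum_congr rfl
  intro P _
  have hle : (lset (m * 3) P).card ≤ m * 3 := by simpa using card_le_card (lset_sub (m * 3) P)
  generalize (lset (m * 3) P).card = l at hle
  have hs : ((m * 3 - l : ℕ) : ℤ) = 3 * m - l := by
    rw [Nat.cast_sub hle]
    push_cast
    ring
  push_cast [hs]
  split_ifs <;> first | ring | (simp only [hs]; ring) | omega

end LR

/-- the recurrence for `a(n,k)` when `d = 3`, as an identity of integers. -/
theorem linear_rec_three (n : ℕ) (hn : 1 ≤ n) (k : ℕ) (hk : k ≤ 2 * n) :
    (numA 3 n k : ℤ) =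
      (numAZ 3 (n - 1) ((k : ℤ) - 2) : ℤ) +
        2 * (3 * ((n : ℤ) - 1) - ((k : ℤ) - 1)) * (numAZ 3 (n - 1) ((k : ℤ) - 1) : ℤ) +
        ((iChoose (3 * ((n : ℤ) - 1) - (k : ℤ)) 2 : ℤ) + 2 * (k : ℤ)) *
          (numAZ 3 (n - 1) (k : ℤ) : ℤ) +
        ((k : ℤ) + 1) * (3 * ((n : ℤ) - 1) - ((k : ℤ) + 1)) *
          (numAZ 3 (n - 1) ((k : ℤ) + 1) : ℤ) +
        (iChoose ((k : ℤ) + 2) 2 : ℤ) * (numAZ 3 (n - 1) ((k : ℤ) + 2) : ℤ) := by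
  obtain ⟨m, rfl⟩ : ∃ m, n = m + 1 := ⟨n - 1, by omega⟩
  have := LR.main m k
  simpa using this
end

section
/- Fix an integer d ≥ 2. For every integer n ≥ 1 and every k with 1 ≤ k ≤ d−1, the number of generalized linear diagrams of order (n,d) having exactly k loops, all of which lie in a single block, equals C(d−1, k) · Σ_{m=0}^{d−k} C(d(n−1)+1−m, d−k−m) · a(n−1,m). -/
open Finset

lemma count_T (U L : Finset ℕ) (hL : L ⊆ U) (r : ℕ) :
    (((powersetCard r U).filter (fun T => L ⊆ T)).card) =
      iChoose ((U.card : ℤ) - L.card) ((r : ℤ) - L.card) := by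
  have hLU := card_le_card hL
  by_cases hr : L.card ≤ r
  · have h1 : (((powersetCard r U).filter (fun T => L ⊆ T)).card) =
        (powersetCard (r - L.card) (U \ L)).card := by
      refine card_bij' (fun T _ => T \ L) (fun T _ => T ∪ L) ?_ ?_ ?_ ?_
      · intro T hT
        simp only [mem_filter, mem_powersetCard] at hT ⊢
        refine ⟨sdiff_subset_sdiff hT.1.1 le_rfl, ?_⟩
        rw [card_sdiff_of_subset hT.2, hT.1.2]
      · intro T hT
        simp only [mem_filter, mem_powersetCard] at hT ⊢
        refine ⟨⟨union_subset (hT.1.trans sdiff_subset) hL, ?_⟩, subset_union_right⟩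
        rw [card_union_of_disjoint, hT.2]
        · omega
        · exact disjoint_of_subset_left hT.1 sdiff_disjoint
      · intro T hT
        simp only [mem_filter, mem_powersetCard] at hT
        exact sdiff_union_of_subset hT.2
      · intro T hT
        simp only [mem_powersetCard] at hT
        ext x
        have := @hT.1 x
        simp only [mem_sdiff, mem_union] at this ⊢
        tauto
    rw [h1, card_powersetCard, card_sdiff_of_subset hL, iChoose]
    split_ifs with h
    · congr 1 <;> omega
    · apply Nat.choose_eq_zero_of_lt
      omega
  · rw [iChoose, if_neg (by omega), card_eq_zero, filter_eq_empty_iff]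
    intro T hT h
    rw [mem_powersetCard] at hT
    have := card_le_card h
    omega

lemma count_f (T : Finset ℕ) (d : ℕ) (h0 : 1 ≤ T.card) (hT : T.card ≤ d) :
    ((finsuppAntidiag T d).filter (fun f => f.support = T)).card
      = (d - 1).choose (d - T.card) := by
  have h1 : ((finsuppAntidiag T d).filter (fun f => f.support = T)).card
      = (finsuppAntidiag T (d - T.card)).card := by
    have hone : ∀ x, (Finsupp.indicator T (fun _ _ => 1) : ℕ →₀ ℕ) x = if x ∈ T then 1 else 0 := by
      intro x; simp [Finsupp.indicator_apply]
    refine card_bij' (fun f _ => f - Finsupp.indicator T (fun _ _ => 1))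
      (fun f _ => f + Finsupp.indicator T (fun _ _ => 1)) ?_ ?_ ?_ ?_
    · intro f hf
      simp only [mem_filter, mem_finsuppAntidiag] at hf ⊢
      obtain ⟨⟨hs, _⟩, hsup⟩ := hf
      constructor
      · have : T.sum (f - Finsupp.indicator T (fun _ _ => 1) : ℕ →₀ ℕ) + T.card = d := by
          rw [card_eq_sum_ones, ← sum_add_distrib, ← hs]
          apply sum_congr rfl
          intro x hx
          have : f x ≠ 0 := by rw [← Finsupp.mem_support_iff, hsup]; exact hx
          simp only [Finsupp.coe_tsub, Pi.sub_apply, hone, if_pos hx]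
          omega
        omega
      · intro x hx
        rw [← hsup]
        simp only [Finsupp.mem_support_iff, Finsupp.coe_tsub, Pi.sub_apply] at hx ⊢
        omega
    · intro f hf
      simp only [mem_filter, mem_finsuppAntidiag] at hf ⊢
      obtain ⟨hs, hsup⟩ := hf
      have : (f + Finsupp.indicator T (fun _ _ => 1) : ℕ →₀ ℕ).support = T := by
        ext x
        simp only [Finsupp.mem_support_iff, Finsupp.coe_add, Pi.add_apply, hone]
        have := @hsup x
        rw [Finsupp.mem_support_iff] at this
        by_cases hx : x ∈ T
        · simp [hx]
        · simp only [hx, if_false]; tauto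
      refine ⟨⟨?_, this.le⟩, this⟩
      have : T.sum (f + Finsupp.indicator T (fun _ _ => 1) : ℕ →₀ ℕ) = T.sum f + T.card := by
        rw [card_eq_sum_ones, ← sum_add_distrib]
        apply sum_congr rfl
        intro x hx
        simp [hx]
      omega
    · intro f hf
      simp only [mem_filter, mem_finsuppAntidiag] at hf
      ext x
      have : x ∈ f.support ↔ x ∈ T := by rw [hf.2]
      rw [Finsupp.mem_support_iff] at this
      simp only [Finsupp.coe_add, Finsupp.coe_tsub, Pi.add_apply, Pi.sub_apply, hone]
      split_ifs with hx
      · have := this.2 hx; omega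
      · omega
    · intro f hf
      simp
  rw [h1, card_finsuppAntidiag_nat_eq_multichoose, Nat.multichoose_eq]
  congr 1
  omega

lemma count_all (U L : Finset ℕ) (hL : L ⊆ U) (d r : ℕ) (hr : 1 ≤ r) (hrd : r ≤ d) :
    ((finsuppAntidiag U d).filter (fun f => L ⊆ f.support ∧ f.support.card = r)).card
      = (d - 1).choose (d - r) * iChoose ((U.card : ℤ) - L.card) ((r : ℤ) - L.card) := by
  rw [← count_T U L hL r]
  rw [card_eq_sum_card_fiberwise (f := fun f : ℕ →₀ ℕ => f.support)
    (t := (powersetCard r U).filter (fun T => L ⊆ T))]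
  · rw [mul_comm, ← smul_eq_mul]
    apply sum_eq_card_nsmul
    intro T hT
    simp only [mem_filter, mem_powersetCard] at hT
    rw [← hT.1.2, ← count_f T d (by omega) (by omega)]
    congr 1
    ext f
    simp only [mem_filter, mem_finsuppAntidiag]
    constructor
    · rintro ⟨⟨⟨hs, hU⟩, h1, h2⟩, rfl⟩
      refine ⟨⟨?_, le_rfl⟩, rfl⟩
      rw [← hs]
      apply sum_subset hU
      intro x _ hx; simpa using hx
    · rintro ⟨⟨hs, -⟩, rfl⟩
      refine ⟨⟨⟨?_, hT.1.1⟩, hT.2, rfl⟩, rfl⟩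
      rw [← hs]
      symm
      apply sum_subset hT.1.1
      intro x _ hx; simpa using hx
  · intro f hf
    simp only [coe_filter, Set.mem_ofPred_eq, mem_filter, mem_finsuppAntidiag, mem_powersetCard] at hf ⊢
    exact ⟨⟨hf.1.2, hf.2.2⟩, hf.2.1⟩

/-- Enumeration of the points outside the special block. -/
structure Gd (φ : ℕ → ℕ) (M d : ℕ) : Prop where
  mono : StrictMono φ
  zero : φ 0 = 0
  tail : ∀ j, M < j → φ j = j + d

/-- Enumeration coming from gap sizes. -/
def ph (f : ℕ →₀ ℕ) (j : ℕ) : ℕ := j + ∑ h ∈ range j, f h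

lemma ph_succ (f : ℕ →₀ ℕ) (j : ℕ) : ph f (j + 1) = ph f j + 1 + f j := by
  simp only [ph, sum_range_succ]; ring

lemma ph_good {f : ℕ →₀ ℕ} {M d : ℕ} (hf : f ∈ finsuppAntidiag (range (M + 1)) d) :
    Gd (ph f) M d := by
  rw [mem_finsuppAntidiag] at hf
  refine ⟨strictMono_nat_of_lt_succ fun j => by rw [ph_succ]; omega, by simp [ph], ?_⟩
  intro j hj
  rw [ph, ← hf.1]
  congr 1
  symm
  apply sum_subset
  · intro x; simp only [mem_range]; omega
  · intro x _ hx
    by_contra h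
    exact hx (hf.2 (Finsupp.mem_support_iff.2 h))

lemma ph_surj {φ : ℕ → ℕ} {M d : ℕ} (hφ : Gd φ M d) :
    ∃ f ∈ finsuppAntidiag (range (M + 1)) d, ph f = φ := by
  have hlt : ∀ j, φ j < φ (j + 1) := fun j => hφ.mono (Nat.lt_succ_self j)
  let f : ℕ →₀ ℕ := Finsupp.onFinset (range (M + 1)) (fun j => φ (j + 1) - φ j - 1) (by
    intro j hj
    by_contra h
    rw [mem_range] at h
    apply hj
    have h1 := hφ.tail j (by omega)
    have h2 := hφ.tail (j + 1) (by omega)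
    omega)
  have hfφ : ph f = φ := by
    ext j
    induction j with
    | zero => simp [ph, hφ.zero]
    | succ j ih =>
      rw [ph_succ, ih]
      have := hlt j
      simp only [f, Finsupp.onFinset_apply]
      omega
  refine ⟨f, ?_, hfφ⟩
  rw [mem_finsuppAntidiag]
  refine ⟨?_, Finsupp.support_onFinset_subset⟩
  have := hφ.tail (M + 1) (by omega)
  rw [← hfφ, ph] at this
  change ∑ h ∈ range (M + 1), f h = d
  omega

open Classical in
/-- The special block. -/
noncomputable def bl (φ : ℕ → ℕ) (M d : ℕ) : Finset ℕ :=
  (Icc 1 (M + d)).filter (fun x => x ∉ Set.range φ)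

lemma mem_bl {φ : ℕ → ℕ} {M d : ℕ} (hφ : Gd φ M d) (x : ℕ) :
    x ∈ bl φ M d ↔ x ∉ Set.range φ := by
  simp only [bl, mem_filter, mem_Icc, and_iff_right_iff_imp]
  intro h
  constructor
  · by_contra h0
    exact h ⟨0, by rw [hφ.zero]; omega⟩
  · by_contra h0
    exact h ⟨x - d, by rw [hφ.tail _ (by omega)]; omega⟩

lemma gd_range {φ : ℕ → ℕ} {M d : ℕ} (hφ : Gd φ M d) (j : ℕ) :
    φ j ∈ Icc 1 (M + d) ↔ j ∈ Icc 1 M := by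
  rw [mem_Icc, mem_Icc]
  have h1 : 1 ≤ φ j ↔ 1 ≤ j := by
    have := hφ.mono.lt_iff_lt (a := 0) (b := j)
    rw [hφ.zero] at this
    omega
  have h2 : φ j ≤ M + d ↔ j ≤ M := by
    have := hφ.mono.lt_iff_lt (a := j) (b := M + 1)
    rw [hφ.tail (M + 1) (by omega)] at this
    omega
  rw [h1, h2]

lemma card_bl {φ : ℕ → ℕ} {M d : ℕ} (hφ : Gd φ M d) : (bl φ M d).card = d := by
  have : bl φ M d = Icc 1 (M + d) \ (Icc 1 M).image φ := by
    ext x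
    simp only [bl, mem_filter, mem_sdiff, mem_image, Set.mem_range, not_exists, not_and]
    constructor
    · rintro ⟨h1, h2⟩; exact ⟨h1, fun j _ => h2 j⟩
    · rintro ⟨h1, h2⟩
      refine ⟨h1, fun j hj => h2 j ?_ hj⟩
      subst hj
      exact (gd_range hφ j).1 h1
  rw [this, card_sdiff_of_subset, card_image_of_injective _ hφ.mono.injective]
  · simp
  · intro x hx
    obtain ⟨j, hj, rfl⟩ := mem_image.1 hx
    exact (gd_range hφ j).2 hj

lemma bl_surj (b : Finset ℕ) (M d : ℕ) (hb : ∀ x ∈ b, x ∈ Icc 1 (M + d)) (hc : b.card = d) :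
    ∃ φ, Gd φ M d ∧ bl φ M d = b := by
  have hinf : (Set.ofPred (fun x => x ∉ b)).Infinite := by
    have := b.finite_toSet.infinite_compl
    exact this
  have hr := Nat.range_nth_of_infinite hinf
  have hmem : ∀ x, x ∈ Set.range (Nat.nth (fun x => x ∉ b)) ↔ x ∉ b := by
    intro x; rw [hr]; rfl
  have hg : Gd (Nat.nth (fun x => x ∉ b)) M d := by
    refine ⟨Nat.nth_strictMono hinf, ?_, ?_⟩
    · apply Nat.nth_zero_of_zero
      intro h; have := hb 0 h; simp at this
    · intro j hj
      have hp : j + d ∉ b := by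
        intro h; have := hb _ h; rw [mem_Icc] at this; omega
      have hcount : Nat.count (fun x => x ∉ b) (j + d) = j := by
        rw [Nat.count_eq_card_filter_range]
        have : (range (j + d)).filter (fun x => x ∉ b) = range (j + d) \ b := by
          ext x; simp
        rw [this, card_sdiff_of_subset, card_range, hc]
        · omega
        · intro x hx
          have := hb _ hx; rw [mem_Icc] at this; rw [mem_range]; omega
      rw [← hcount, Nat.nth_count hp, hcount]
  refine ⟨_, hg, ?_⟩
  ext x
  rw [mem_bl hg, hmem, not_not]

lemma bl_inj {φ ψ : ℕ → ℕ} {M d : ℕ} (hφ : Gd φ M d) (hψ : Gd ψ M d)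
    (h : bl φ M d = bl ψ M d) : φ = ψ := by
  rw [← StrictMono.range_inj hφ.mono hψ.mono]
  ext x
  rw [← not_iff_not, ← mem_bl hφ, ← mem_bl hψ, h]

lemma bl_runs {φ : ℕ → ℕ} {M d : ℕ} (hφ : Gd φ M d) :
    ((bl φ M d).filter (fun i => i + 1 ∈ bl φ M d)).card
      + ((range (M + 1)).filter (fun j => φ (j + 1) ≠ φ j + 1)).card = d := by
  conv_rhs => rw [← card_bl hφ, ← card_filter_add_card_filter_not (fun i => i + 1 ∈ bl φ M d)]
  congr 1
  have hlt : ∀ j, φ j < φ (j + 1) := fun j => hφ.mono (Nat.lt_succ_self j)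
  refine card_bij (fun j _ => φ (j + 1) - 1) ?_ ?_ ?_
  · intro j hj
    rw [mem_filter, mem_range] at hj
    have := hlt j
    rw [mem_filter, mem_bl hφ, mem_bl hφ, not_not]
    refine ⟨?_, j + 1, by omega⟩
    rintro ⟨i, hi⟩
    have h1 : j < i := hφ.mono.lt_iff_lt.1 (by omega)
    have h2 : i < j + 1 := hφ.mono.lt_iff_lt.1 (by omega)
    omega
  · intro i _ j _ h
    have h1 := hlt i
    have h2 := hlt j
    have := hφ.mono.injective (a₁ := i + 1) (a₂ := j + 1) (by omega)
    omega
  · intro x hx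
    rw [mem_filter, mem_bl hφ, mem_bl hφ, not_not] at hx
    obtain ⟨hx, j, hj⟩ := hx
    have hj0 : j ≠ 0 := by rintro rfl; rw [hφ.zero] at hj; omega
    obtain ⟨i, rfl⟩ := Nat.exists_eq_succ_of_ne_zero hj0
    simp only [Nat.succ_eq_add_one] at *
    have hne : φ (i + 1) ≠ φ i + 1 := by
      intro h; exact hx ⟨i, by omega⟩
    refine ⟨i, ?_, by omega⟩
    rw [mem_filter, mem_range]
    refine ⟨?_, hne⟩
    by_contra h
    have h1 := hφ.tail i (by omega)
    have h2 := hφ.tail (i + 1) (by omega)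
    omega

/-- Insert the special block into a smaller diagram. -/
noncomputable def glue (φ : ℕ → ℕ) (M d : ℕ) (Q : Finset (Finset ℕ)) : Finset (Finset ℕ) :=
  insert (bl φ M d) (Q.image (fun c => c.image φ))

lemma mem_glue {φ : ℕ → ℕ} {M d : ℕ} {Q : Finset (Finset ℕ)} {c : Finset ℕ} :
    c ∈ glue φ M d Q ↔ c = bl φ M d ∨ ∃ a ∈ Q, a.image φ = c := by
  simp [glue]

lemma diag_uniq {N d : ℕ} {P : Finset (Finset ℕ)} (hP : IsLinearDiagram N d P) {b c : Finset ℕ}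
    (hb : b ∈ P) (hc : c ∈ P) {x : ℕ} (hxb : x ∈ b) (hxc : x ∈ c) : b = c :=
  (hP.2.2 x (hP.2.1 b hb x hxb)).unique ⟨hb, hxb⟩ ⟨hc, hxc⟩

lemma glue_diag {φ : ℕ → ℕ} {M d : ℕ} (hφ : Gd φ M d) {Q : Finset (Finset ℕ)}
    (hQ : IsLinearDiagram M d Q) : IsLinearDiagram (M + d) d (glue φ M d Q) := by
  refine ⟨?_, ?_, ?_⟩
  · intro b hb
    rcases mem_glue.1 hb with rfl | ⟨a, ha, rfl⟩
    · exact card_bl hφ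
    · rw [card_image_of_injective _ hφ.mono.injective]; exact hQ.1 a ha
  · intro b hb x hx
    rcases mem_glue.1 hb with rfl | ⟨a, ha, rfl⟩
    · simp only [bl, mem_filter] at hx
      exact hx.1
    · obtain ⟨j, hj, rfl⟩ := mem_image.1 hx
      exact (gd_range hφ j).2 (hQ.2.1 a ha j hj)
  · intro x hx
    by_cases hr : x ∈ Set.range φ
    · obtain ⟨j, rfl⟩ := hr
      obtain ⟨a, ⟨ha, hja⟩, hu⟩ := hQ.2.2 j ((gd_range hφ j).1 hx)
      refine ⟨a.image φ, ⟨mem_glue.2 (Or.inr ⟨a, ha, rfl⟩), mem_image_of_mem _ hja⟩, ?_⟩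
      rintro c ⟨hc, hjc⟩
      rcases mem_glue.1 hc with rfl | ⟨a', ha', rfl⟩
      · exact absurd ⟨j, rfl⟩ ((mem_bl hφ _).1 hjc)
      · obtain ⟨j', hj', he⟩ := mem_image.1 hjc
        have := hφ.mono.injective he
        subst this
        rw [hu a' ⟨ha', hj'⟩]
    · refine ⟨bl φ M d, ⟨mem_glue.2 (Or.inl rfl), (mem_bl hφ x).2 hr⟩, ?_⟩
      rintro c ⟨hc, hjc⟩
      rcases mem_glue.1 hc with rfl | ⟨a', ha', rfl⟩
      · rfl
      · obtain ⟨j', hj', he⟩ := mem_image.1 hjc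
        exact absurd ⟨j', he⟩ hr

lemma glue_surj {φ : ℕ → ℕ} {M d : ℕ} (hφ : Gd φ M d) {P : Finset (Finset ℕ)}
    (hP : IsLinearDiagram (M + d) d P) (hb : bl φ M d ∈ P) :
    ∃ Q, IsLinearDiagram M d Q ∧ glue φ M d Q = P := by
  classical
  let g : Finset ℕ → Finset ℕ := fun c => (Icc 1 M).filter (fun j => φ j ∈ c)
  have hg : ∀ c ∈ P.erase (bl φ M d), (g c).image φ = c := by
    intro c hc
    rw [mem_erase] at hc
    ext x
    simp only [g, mem_image, mem_filter]
    constructor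
    · rintro ⟨j, ⟨_, h⟩, rfl⟩; exact h
    · intro hx
      have hxI := hP.2.1 c hc.2 x hx
      have : x ∈ Set.range φ := by
        by_contra h
        exact hc.1 (diag_uniq hP hc.2 hb hx ((mem_bl hφ x).2 h))
      obtain ⟨j, rfl⟩ := this
      exact ⟨j, ⟨(gd_range hφ j).1 hxI, hx⟩, rfl⟩
  refine ⟨(P.erase (bl φ M d)).image g, ⟨?_, ?_, ?_⟩, ?_⟩
  · intro b hb'
    obtain ⟨c, hc, rfl⟩ := mem_image.1 hb'
    rw [← card_image_of_injective _ hφ.mono.injective, hg c hc]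
    exact hP.1 c (mem_of_mem_erase hc)
  · intro b hb' x hx
    obtain ⟨c, hc, rfl⟩ := mem_image.1 hb'
    exact (mem_filter.1 hx).1
  · intro j hj
    obtain ⟨c, ⟨hc, hjc⟩, hu⟩ := hP.2.2 (φ j) ((gd_range hφ j).2 hj)
    have hne : c ≠ bl φ M d := by
      rintro rfl
      exact (mem_bl hφ _).1 hjc ⟨j, rfl⟩
    refine ⟨g c, ⟨mem_image_of_mem _ (mem_erase.2 ⟨hne, hc⟩), mem_filter.2 ⟨hj, hjc⟩⟩, ?_⟩
    rintro a ⟨ha, hja⟩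
    obtain ⟨c', hc', rfl⟩ := mem_image.1 ha
    rw [hu c' ⟨mem_of_mem_erase hc', (mem_filter.1 hja).2⟩]
  · ext c
    rw [mem_glue]
    constructor
    · rintro (rfl | ⟨a, ha, rfl⟩)
      · exact hb
      · obtain ⟨c', hc', rfl⟩ := mem_image.1 ha
        rw [hg c' hc']; exact mem_of_mem_erase hc'
    · intro hc
      by_cases h : c = bl φ M d
      · exact Or.inl h
      · exact Or.inr ⟨g c, mem_image_of_mem _ (mem_erase.2 ⟨h, hc⟩), hg c (mem_erase.2 ⟨h, hc⟩)⟩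

lemma glue_inj {φ : ℕ → ℕ} {M d : ℕ} (hd : 1 ≤ d) (hφ : Gd φ M d) {Q Q' : Finset (Finset ℕ)}
    (h : glue φ M d Q = glue φ M d Q') : Q = Q' := by
  have key : ∀ Q Q', glue φ M d Q = glue φ M d Q' → ∀ a ∈ Q, a ∈ Q' := by
    intro Q Q' h a ha
    have h1 : a.image φ ∈ glue φ M d Q' := h ▸ mem_glue.2 (Or.inr ⟨a, ha, rfl⟩)
    rcases mem_glue.1 h1 with h2 | ⟨a', ha', he⟩
    · exfalso
      have hc := card_bl hφ
      obtain ⟨x, hx⟩ := card_pos.1 (by omega : 0 < (bl φ M d).card)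
      have hx' := hx
      rw [← h2] at hx'
      obtain ⟨j, _, hj⟩ := mem_image.1 hx'
      exact (mem_bl hφ x).1 hx ⟨j, hj⟩
    · rw [← image_injective hφ.mono.injective he]; exact ha'
  ext a
  exact ⟨key Q Q' h a, key Q' Q h.symm a⟩

open Classical in
/-- The set of loops, as a finset. -/
noncomputable def loopF (N : ℕ) (P : Finset (Finset ℕ)) : Finset ℕ :=
  (range N).filter (fun i => 1 ≤ i ∧ i + 1 ≤ N ∧ ∃ b ∈ P, i ∈ b ∧ i + 1 ∈ b)

lemma mem_loopF {N : ℕ} {P : Finset (Finset ℕ)} {i : ℕ} :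
    i ∈ loopF N P ↔ 1 ≤ i ∧ i + 1 ≤ N ∧ ∃ b ∈ P, i ∈ b ∧ i + 1 ∈ b := by
  simp only [loopF, mem_filter, mem_range, and_iff_right_iff_imp]
  intro h; omega

lemma linLoops_eq (N : ℕ) (P : Finset (Finset ℕ)) : linLoops N P = (loopF N P).card := by
  rw [linLoops, ← Set.ncard_coe_finset]
  congr 1
  ext i
  rw [mem_coe, mem_loopF]; rfl

/-- All loops lie in the block `b`. -/
def AllIn (N : ℕ) (P : Finset (Finset ℕ)) (b : Finset ℕ) : Prop :=
  ∀ i : ℕ, 1 ≤ i → i + 1 ≤ N → (∃ c ∈ P, i ∈ c ∧ i + 1 ∈ c) → i ∈ b ∧ i + 1 ∈ b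

lemma allIn_iff {φ : ℕ → ℕ} {M d : ℕ} (hφ : Gd φ M d) {Q : Finset (Finset ℕ)}
    (hQ : IsLinearDiagram M d Q) :
    AllIn (M + d) (glue φ M d Q) (bl φ M d) ↔ ∀ j ∈ loopF M Q, φ (j + 1) ≠ φ j + 1 := by
  constructor
  · intro h j hj he
    obtain ⟨h1, h2, a, ha, hja, hja'⟩ := mem_loopF.1 hj
    have m1 := mem_Icc.1 ((gd_range hφ j).2 (hQ.2.1 a ha _ hja))
    have m2 := mem_Icc.1 ((gd_range hφ (j + 1)).2 (hQ.2.1 a ha _ hja'))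
    have := h (φ j) m1.1 (by omega) ⟨a.image φ, mem_glue.2 (Or.inr ⟨a, ha, rfl⟩),
      mem_image_of_mem _ hja, he ▸ mem_image_of_mem _ hja'⟩
    exact (mem_bl hφ _).1 this.1 ⟨j, rfl⟩
  · rintro h i h1 h2 ⟨c, hc, hi, hi'⟩
    rcases mem_glue.1 hc with rfl | ⟨a, ha, rfl⟩
    · exact ⟨hi, hi'⟩
    · exfalso
      obtain ⟨j, hj, rfl⟩ := mem_image.1 hi
      obtain ⟨l, hl, he⟩ := mem_image.1 hi'
      have h3 : j < l := hφ.mono.lt_iff_lt.1 (by omega)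
      have h4 : l = j + 1 := by
        by_contra hne
        have h5 := hφ.mono (show j < j + 1 by omega)
        have h6 := hφ.mono (show j + 1 < l by omega)
        omega
      subst h4
      have m2 := mem_Icc.1 (hQ.2.1 a ha _ hl)
      have m1 := mem_Icc.1 (hQ.2.1 a ha _ hj)
      exact h j (mem_loopF.2 ⟨m1.1, m2.2, a, ha, hj, hl⟩) he

lemma loops_of_allIn {N d : ℕ} {P : Finset (Finset ℕ)} (hP : IsLinearDiagram N d P)
    {b : Finset ℕ} (hb : b ∈ P) (h : AllIn N P b) :
    loopF N P = b.filter (fun i => i + 1 ∈ b) := by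
  ext i
  rw [mem_loopF, mem_filter]
  constructor
  · rintro ⟨h1, h2, h3⟩; exact h i h1 h2 h3
  · rintro ⟨h1, h2⟩
    have m1 := mem_Icc.1 (hP.2.1 b hb _ h1)
    have m2 := mem_Icc.1 (hP.2.1 b hb _ h2)
    exact ⟨m1.1, m2.2, b, hb, h1, h2⟩

lemma diag_finite (N d : ℕ) : {P : Finset (Finset ℕ) | IsLinearDiagram N d P}.Finite := by
  apply ((Icc 1 N).powerset.powerset).finite_toSet.subset
  intro P hP
  rw [mem_coe, mem_powerset]
  intro b hb
  rw [mem_powerset]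
  intro x hx
  exact hP.2.1 b hb x hx

lemma ph_support {f : ℕ →₀ ℕ} {M d : ℕ} (hf : f ∈ finsuppAntidiag (range (M + 1)) d) :
    (range (M + 1)).filter (fun j => ph f (j + 1) ≠ ph f j + 1) = f.support := by
  rw [mem_finsuppAntidiag] at hf
  ext j
  have := @hf.2 j
  rw [mem_filter, ph_succ]
  rw [Finsupp.mem_support_iff] at *
  constructor
  · rintro ⟨_, h⟩; omega
  · intro h; exact ⟨this h, by omega⟩

/-- The index set. -/
noncomputable def idx (M d r : ℕ) (Q : Finset (Finset ℕ)) : Finset (ℕ →₀ ℕ) :=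
  (finsuppAntidiag (range (M + 1)) d).filter (fun f => loopF M Q ⊆ f.support ∧ f.support.card = r)

lemma idx_spec {M d k : ℕ} (hk : k ≤ d) {Q : Finset (Finset ℕ)} (hQ : IsLinearDiagram M d Q)
    {f : ℕ →₀ ℕ} (hf : f ∈ finsuppAntidiag (range (M + 1)) d) :
    f ∈ idx M d (d - k) Q ↔ linLoops (M + d) (glue (ph f) M d Q) = k ∧
      AllIn (M + d) (glue (ph f) M d Q) (bl (ph f) M d) := by
  have hφ := ph_good hf
  have hA : loopF M Q ⊆ f.support ↔ AllIn (M + d) (glue (ph f) M d Q) (bl (ph f) M d) := by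
    rw [allIn_iff hφ hQ]
    apply forall₂_congr
    intro j _
    rw [Finsupp.mem_support_iff, ph_succ]
    omega
  rw [idx, mem_filter, and_iff_right hf, hA, and_comm]
  apply and_congr_left
  intro h
  rw [linLoops_eq, loops_of_allIn (glue_diag hφ hQ) (mem_glue.2 (Or.inl rfl)) h]
  have := bl_runs hφ
  rw [ph_support hf] at this
  omega

lemma main_count (M d k : ℕ) (hk1 : 1 ≤ k) (hk2 : k + 1 ≤ d) :
    Set.ncard {P : Finset (Finset ℕ) | IsLinearDiagram (M + d) d P ∧ linLoops (M + d) P = k ∧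
      ∃ b ∈ P, AllIn (M + d) P b} =
    ((diag_finite M d).toFinset.sigma (fun Q => idx M d (d - k) Q)).card := by
  rw [← Set.ncard_coe_finset]
  symm
  refine Set.ncard_congr (fun x _ => glue (ph x.2) M d x.1) ?_ ?_ ?_
  · rintro ⟨Q, f⟩ hx
    rw [mem_coe, mem_sigma, Set.Finite.mem_toFinset] at hx
    obtain ⟨hQ, hf⟩ := hx
    have hf' := (mem_filter.1 hf).1
    have := (idx_spec (by omega) hQ hf').1 hf
    exact ⟨glue_diag (ph_good hf') hQ, this.1, _, mem_glue.2 (Or.inl rfl), this.2⟩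
  · rintro ⟨Q, f⟩ ⟨Q', f'⟩ hx hx' h
    rw [mem_coe, mem_sigma, Set.Finite.mem_toFinset] at hx hx'
    obtain ⟨hQ, hf⟩ := hx
    obtain ⟨hQ', hf'⟩ := hx'
    simp only at hQ hf hQ' hf' h
    have mf := (mem_filter.1 hf).1
    have mf' := (mem_filter.1 hf').1
    have s1 := (idx_spec (by omega) hQ mf).1 hf
    have s2 := (idx_spec (by omega) hQ' mf').1 hf'
    have hP := glue_diag (ph_good mf) hQ
    have hb1 : bl (ph f) M d ∈ glue (ph f) M d Q := mem_glue.2 (Or.inl rfl)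
    have hb2 : bl (ph f') M d ∈ glue (ph f) M d Q := h ▸ mem_glue.2 (Or.inl rfl)
    have hbl : bl (ph f) M d = bl (ph f') M d := by
      have hpos : 0 < (loopF (M + d) (glue (ph f) M d Q)).card := by
        rw [← linLoops_eq, s1.1]; omega
      obtain ⟨i, hi⟩ := card_pos.1 hpos
      obtain ⟨i1, i2, i3⟩ := mem_loopF.1 hi
      exact diag_uniq hP hb1 hb2 (s1.2 i i1 i2 i3).1 (s2.2 i i1 i2 (h ▸ i3)).1
    have hph := bl_inj (ph_good mf) (ph_good mf') hbl
    have hff : f = f' := by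
      ext j
      have h1 := ph_succ f j
      have h2 := ph_succ f' j
      rw [hph] at h1
      omega
    subst hff
    have := glue_inj (by omega) (ph_good mf) h
    subst this
    rfl
  · rintro P ⟨hP, hl, b, hb, hA⟩
    obtain ⟨φ, hφ, rfl⟩ := bl_surj b M d (hP.2.1 b hb) (hP.1 b hb)
    obtain ⟨f, hf, rfl⟩ := ph_surj hφ
    obtain ⟨Q, hQ, rfl⟩ := glue_surj hφ hP hb
    refine ⟨⟨Q, f⟩, ?_, rfl⟩
    rw [mem_coe, mem_sigma, Set.Finite.mem_toFinset]
    exact ⟨hQ, (idx_spec (by omega) hQ hf).2 ⟨hl, hA⟩⟩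

/-- for `1 ≤ k ≤ d−1`, the number of generalized linear diagrams of order
`(n,d)` with exactly `k` loops all lying in a single block equals
`C(d−1,k) · Σ_{m=0}^{d−k} C(d(n−1)+1−m, d−k−m) · a(n−1,m)`. -/
theorem linear_single_block_loops (d : ℕ) (hd : 2 ≤ d) (n : ℕ) (hn : 1 ≤ n) (k : ℕ)
    (hk1 : 1 ≤ k) (hk2 : k ≤ d - 1) :
    Set.ncard {P : Finset (Finset ℕ) |
        IsLinearDiagram (n * d) d P ∧ linLoops (n * d) P = k ∧
          ∃ b ∈ P, ∀ i : ℕ, 1 ≤ i → i + 1 ≤ n * d →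
            (∃ c ∈ P, i ∈ c ∧ i + 1 ∈ c) → i ∈ b ∧ i + 1 ∈ b} =
      (d - 1).choose k *
        ∑ m ∈ Finset.range (d - k + 1),
          iChoose ((d : ℤ) * ((n : ℤ) - 1) + 1 - (m : ℤ)) ((d : ℤ) - k - m) *
            numA d (n - 1) m := by
  obtain ⟨n, rfl⟩ : ∃ n', n = n' + 1 := ⟨n - 1, by omega⟩
  have hN : (n + 1) * d = n * d + d := by ring
  rw [hN]
  refine (main_count (n * d) d k hk1 (by omega)).trans ?_
  rw [card_sigma]
  have hidx : ∀ Q ∈ (diag_finite (n * d) d).toFinset, (idx (n * d) d (d - k) Q).card =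
      (d - 1).choose k * iChoose ((d : ℤ) * n + 1 - (linLoops (n * d) Q : ℕ))
        ((d : ℤ) - k - (linLoops (n * d) Q : ℕ)) := by
    intro Q hQ
    rw [idx, count_all _ _ _ _ _ (by omega) (by omega), linLoops_eq, card_range]
    · congr 2
      · omega
      · push_cast; ring
      · omega
    · intro i hi
      have := mem_loopF.1 hi
      rw [mem_range]; omega
  rw [sum_congr rfl hidx, ← mul_sum]
  congr 1
  rw [← sum_filter_of_ne (p := fun Q => linLoops (n * d) Q ∈ range (d - k + 1))]
  · rw [← sum_fiberwise_of_maps_to (t := range (d - k + 1)) (g := fun Q => linLoops (n * d) Q)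
      (fun Q hQ => (mem_filter.1 hQ).2)]
    apply sum_congr rfl
    intro m hm
    rw [Nat.add_sub_cancel]
    have hA : numA d n m = (((diag_finite (n * d) d).toFinset.filter
        (fun Q => linLoops (n * d) Q ∈ range (d - k + 1))).filter
        (fun Q => linLoops (n * d) Q = m)).card := by
      rw [numA, ← Set.ncard_coe_finset]
      congr 1
      ext Q
      simp only [coe_filter, mem_filter, Set.Finite.mem_toFinset, Set.mem_ofPred_eq]
      constructor
      · rintro ⟨h1, h2⟩; exact ⟨⟨h1, h2 ▸ hm⟩, h2⟩
      · rintro ⟨⟨h1, _⟩, h2⟩; exact ⟨h1, h2⟩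
    rw [hA, mul_comm (iChoose _ _), ← smul_eq_mul (#_)]
    apply sum_eq_card_nsmul
    intro Q hQ
    rw [(mem_filter.1 hQ).2]
    congr 1
    push_cast; ring
  · intro Q _ h
    rw [mem_range]
    by_contra hc
    apply h
    rw [iChoose, if_neg (by omega)]
end

section
/- Let d = 3. For every integer n ≥ 1, a(n,1) = 2·a(n,0) + 2(3n−3)·a(n−1,0) + 2·a(n−1,1). -/
open Classical in
noncomputable def TP (S : Finset ℕ) : Finset (Finset (Finset ℕ)) :=
  ((S.powersetCard 3).powerset).filter (fun P => ∀ x ∈ S, ∃! b : Finset ℕ, b ∈ P ∧ x ∈ b)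

lemma mem_TP {S : Finset ℕ} {P : Finset (Finset ℕ)} :
    P ∈ TP S ↔ (∀ b ∈ P, b ⊆ S ∧ b.card = 3) ∧ ∀ x ∈ S, ∃! b : Finset ℕ, b ∈ P ∧ x ∈ b := by
  classical
  simp only [TP, Finset.mem_filter, Finset.mem_powerset]
  refine and_congr_left fun _ => ?_
  constructor
  · intro h b hb
    exact Finset.mem_powersetCard.1 (h hb)
  · intro h b hb
    exact Finset.mem_powersetCard.2 (h b hb)

lemma isLin_iff {N : ℕ} {P : Finset (Finset ℕ)} :
    IsLinearDiagram N 3 P ↔ P ∈ TP (Finset.Icc 1 N) := by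
  rw [mem_TP]
  unfold IsLinearDiagram
  constructor
  · rintro ⟨h1, h2, h3⟩
    exact ⟨fun b hb => ⟨fun x hx => h2 b hb x hx, h1 b hb⟩, h3⟩
  · rintro ⟨h1, h3⟩
    exact ⟨fun b hb => (h1 b hb).2, fun b hb x hx => (h1 b hb).1 hx, h3⟩

lemma TP_uniq {S : Finset ℕ} {P : Finset (Finset ℕ)} (hP : P ∈ TP S) {b c : Finset ℕ}
    (hb : b ∈ P) (hc : c ∈ P) {x : ℕ} (hxb : x ∈ b) (hxc : x ∈ c) : b = c := by
  rw [mem_TP] at hP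
  exact (hP.2 x ((hP.1 b hb).1 hxb)).unique ⟨hb, hxb⟩ ⟨hc, hxc⟩

open Classical in
lemma decomp {ι : Type} (S : Finset ℕ) (T : Finset ι) (B : ι → Finset ℕ)
    (p : Finset (Finset ℕ) → Prop)
    (h : ∀ P ∈ TP S, p P → ∃! t, t ∈ T ∧ B t ∈ P) :
    ((TP S).filter p).card = ∑ t ∈ T, ((TP S).filter (fun P => p P ∧ B t ∈ P)).card := by
  rw [← Finset.card_biUnion]
  · congr 1
    ext P
    simp only [Finset.mem_filter, Finset.mem_biUnion]
    constructor
    · rintro ⟨h1, h2⟩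
      obtain ⟨t, ⟨ht, hB⟩, -⟩ := h P h1 h2
      exact ⟨t, ht, h1, h2, hB⟩
    · rintro ⟨t, ht, h1, h2, hB⟩
      exact ⟨h1, h2⟩
  · intro s hs t ht hst
    rw [Function.onFun, Finset.disjoint_left]
    intro P h1 h2
    simp only [Finset.mem_filter] at h1 h2
    exact hst ((h P h1.1 h1.2.1).unique ⟨hs, h1.2.2⟩ ⟨ht, h2.2.2⟩)

open Classical in
lemma erase_count {S b : Finset ℕ} (hb : b ⊆ S) (hc : b.card = 3)
    (p q : Finset (Finset ℕ) → Prop)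
    (h : ∀ Q ∈ TP (S \ b), (p (insert b Q) ↔ q Q)) :
    ((TP S).filter (fun P => p P ∧ b ∈ P)).card = ((TP (S \ b)).filter q).card := by
  have hne : b.Nonempty := by rw [← Finset.card_pos]; omega
  have hnot : ∀ Q ∈ TP (S \ b), b ∉ Q := by
    intro Q hQ hbQ
    obtain ⟨x, hx⟩ := hne
    have := ((mem_TP.1 hQ).1 b hbQ).1 hx
    simp [hx] at this
  have her : ∀ P ∈ TP S, b ∈ P → P.erase b ∈ TP (S \ b) := by
    intro P hP hbP
    have hP' := mem_TP.1 hP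
    rw [mem_TP]
    refine ⟨fun c hcc => ?_, fun x hx => ?_⟩
    · rw [Finset.mem_erase] at hcc
      refine ⟨fun x hx => ?_, (hP'.1 c hcc.2).2⟩
      rw [Finset.mem_sdiff]
      exact ⟨(hP'.1 c hcc.2).1 hx, fun hxb => hcc.1 (TP_uniq hP hcc.2 hbP hx hxb)⟩
    · rw [Finset.mem_sdiff] at hx
      obtain ⟨c, ⟨h1, h2⟩, h3⟩ := hP'.2 x hx.1
      refine ⟨c, ⟨Finset.mem_erase.2 ⟨?_, h1⟩, h2⟩, ?_⟩
      · rintro rfl; exact hx.2 h2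
      · rintro c' ⟨h4, h5⟩
        exact h3 c' ⟨Finset.mem_of_mem_erase h4, h5⟩
  have hins : ∀ Q ∈ TP (S \ b), insert b Q ∈ TP S := by
    intro Q hQ
    have hQ' := mem_TP.1 hQ
    rw [mem_TP]
    refine ⟨fun c hcc => ?_, fun x hx => ?_⟩
    · rcases Finset.mem_insert.1 hcc with rfl | hcc
      · exact ⟨hb, hc⟩
      · exact ⟨(hQ'.1 c hcc).1.trans Finset.sdiff_subset, (hQ'.1 c hcc).2⟩
    · by_cases hxb : x ∈ b
      · refine ⟨b, ⟨Finset.mem_insert_self _ _, hxb⟩, ?_⟩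
        rintro c ⟨h4, h5⟩
        rcases Finset.mem_insert.1 h4 with rfl | h4
        · rfl
        · have := (hQ'.1 c h4).1 h5
          simp [hxb] at this
      · obtain ⟨c, ⟨h1, h2⟩, h3⟩ := hQ'.2 x (Finset.mem_sdiff.2 ⟨hx, hxb⟩)
        refine ⟨c, ⟨Finset.mem_insert_of_mem h1, h2⟩, ?_⟩
        rintro c' ⟨h4, h5⟩
        rcases Finset.mem_insert.1 h4 with rfl | h4
        · exact absurd h5 hxb
        · exact h3 c' ⟨h4, h5⟩
  refine Finset.card_bij' (fun P _ => P.erase b) (fun Q _ => insert b Q) ?_ ?_ ?_ ?_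
  · intro P hP
    rw [Finset.mem_filter] at hP ⊢
    have := her P hP.1 hP.2.2
    refine ⟨this, (h _ this).1 ?_⟩
    rw [Finset.insert_erase hP.2.2]; exact hP.2.1
  · intro Q hQ
    rw [Finset.mem_filter] at hQ ⊢
    exact ⟨hins Q hQ.1, (h Q hQ.1).2 hQ.2, Finset.mem_insert_self _ _⟩
  · intro P hP
    rw [Finset.mem_filter] at hP
    exact Finset.insert_erase hP.2.2
  · intro Q hQ
    rw [Finset.mem_filter] at hQ
    exact Finset.erase_insert (hnot Q hQ.1)

def NoR (R : ℕ → ℕ → Prop) (P : Finset (Finset ℕ)) : Prop :=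
  ∀ b ∈ P, ∀ x ∈ b, ∀ y ∈ b, ¬ R x y

open Classical in
noncomputable def FF (S : Finset ℕ) (R : ℕ → ℕ → Prop) : ℕ :=
  ((TP S).filter (NoR R)).card

lemma FF_transport (σ : ℕ → ℕ) (hσ : Function.Injective σ) (S S' : Finset ℕ)
    (R R' : ℕ → ℕ → Prop) (hS : S.image σ = S')
    (hR : ∀ x ∈ S, ∀ y ∈ S, (R' (σ x) (σ y) ↔ R x y)) : FF S R = FF S' R' := by
  classical
  subst hS
  have hI : Function.Injective (Finset.image σ) := Finset.image_injective hσ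
  have mi : ∀ {x : ℕ} {b : Finset ℕ}, σ x ∈ b.image σ ↔ x ∈ b := by
    intro x b; exact hσ.mem_finset_image
  unfold FF
  refine Finset.card_bij (fun P _ => P.image (Finset.image σ)) ?_ ?_ ?_
  · intro P hP
    rw [Finset.mem_filter] at hP ⊢
    obtain ⟨hP, hN⟩ := hP
    have hP' := mem_TP.1 hP
    refine ⟨mem_TP.2 ⟨?_, ?_⟩, ?_⟩
    · intro c hc
      obtain ⟨b, hb, rfl⟩ := Finset.mem_image.1 hc
      exact ⟨Finset.image_subset_image (hP'.1 b hb).1,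
        by rw [Finset.card_image_of_injective _ hσ]; exact (hP'.1 b hb).2⟩
    · intro x hx
      obtain ⟨x, hx', rfl⟩ := Finset.mem_image.1 hx
      obtain ⟨b, ⟨h1, h2⟩, h3⟩ := hP'.2 x hx'
      refine ⟨b.image σ, ⟨Finset.mem_image_of_mem _ h1, mi.2 h2⟩, ?_⟩
      rintro c ⟨hc, hxc⟩
      obtain ⟨b', hb', rfl⟩ := Finset.mem_image.1 hc
      rw [h3 b' ⟨hb', mi.1 hxc⟩]
    · intro c hc x hx y hy
      obtain ⟨b, hb, rfl⟩ := Finset.mem_image.1 hc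
      obtain ⟨x, hx', rfl⟩ := Finset.mem_image.1 hx
      obtain ⟨y, hy', rfl⟩ := Finset.mem_image.1 hy
      rw [hR x ((hP'.1 b hb).1 hx') y ((hP'.1 b hb).1 hy')]
      exact hN b hb x hx' y hy'
  · intro P _ Q _ h
    exact Finset.image_injective hI h
  · intro P' hP
    rw [Finset.mem_filter] at hP
    obtain ⟨hP, hN⟩ := hP
    have hP' := mem_TP.1 hP
    have key : ∀ c ∈ P', ∃ b, b ⊆ S ∧ b.image σ = c := by
      intro c hc
      obtain ⟨b, hb, hb'⟩ := Finset.subset_image_iff.1 (hP'.1 c hc).1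
      exact ⟨b, hb, hb'⟩
    refine ⟨(S.powerset).filter (fun b => b.image σ ∈ P'), ?_, ?_⟩
    · rw [Finset.mem_filter]
      refine ⟨mem_TP.2 ⟨?_, ?_⟩, ?_⟩
      · intro b hb
        rw [Finset.mem_filter, Finset.mem_powerset] at hb
        refine ⟨hb.1, ?_⟩
        rw [← Finset.card_image_of_injective _ hσ]; exact (hP'.1 _ hb.2).2
      · intro x hx
        obtain ⟨c, ⟨h1, h2⟩, h3⟩ := hP'.2 (σ x) (Finset.mem_image_of_mem _ hx)
        obtain ⟨b, hb, rfl⟩ := key c h1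
        refine ⟨b, ⟨?_, mi.1 h2⟩, ?_⟩
        · rw [Finset.mem_filter, Finset.mem_powerset]; exact ⟨hb, h1⟩
        · rintro b' ⟨h4, h5⟩
          rw [Finset.mem_filter] at h4
          exact hI (h3 _ ⟨h4.2, mi.2 h5⟩)
      · intro b hb x hx y hy
        rw [Finset.mem_filter, Finset.mem_powerset] at hb
        rw [← hR x (hb.1 hx) y (hb.1 hy)]
        exact hN _ hb.2 _ (mi.2 hx) _ (mi.2 hy)
    · ext c
      simp only [Finset.mem_image, Finset.mem_filter, Finset.mem_powerset]
      constructor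
      · rintro ⟨b, hb, rfl⟩; exact hb.2
      · intro hc
        obtain ⟨b, hb, rfl⟩ := key c hc
        exact ⟨b, ⟨hb, hc⟩, rfl⟩

def Adj (x y : ℕ) : Prop := y = x + 1

def Lp (P : Finset (Finset ℕ)) (i : ℕ) : Prop := ∃ b ∈ P, i ∈ b ∧ i + 1 ∈ b

lemma noAdj_iff (P) : NoR Adj P ↔ ∀ j, ¬ Lp P j := by
  unfold NoR Adj Lp
  constructor
  · rintro h j ⟨b, hb, h1, h2⟩
    exact h b hb j h1 _ h2 rfl
  · rintro h b hb x hx y hy rfl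
    exact h x ⟨b, hb, hx, hy⟩

lemma loopset {N : ℕ} {P} (hP : P ∈ TP (Finset.Icc 1 N)) :
    {i : ℕ | 1 ≤ i ∧ i + 1 ≤ N ∧ ∃ b ∈ P, i ∈ b ∧ i + 1 ∈ b} = {i | Lp P i} := by
  ext i
  simp only [Set.mem_ofPred_eq, Lp]
  constructor
  · exact fun h => h.2.2
  · rintro ⟨b, hb, h1, h2⟩
    have := (mem_TP.1 hP).1 b hb
    have h3 := Finset.mem_Icc.1 (this.1 h1)
    have h4 := Finset.mem_Icc.1 (this.1 h2)
    exact ⟨h3.1, h4.2, b, hb, h1, h2⟩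

lemma Lp_range {N : ℕ} {P} (hP : P ∈ TP (Finset.Icc 1 N)) {i} (h : Lp P i) :
    1 ≤ i ∧ i + 1 ≤ N := by
  have : i ∈ {i | Lp P i} := h
  rw [← loopset hP] at this
  exact ⟨this.1, this.2.1⟩

lemma loops_zero {N : ℕ} {P} (hP : P ∈ TP (Finset.Icc 1 N)) :
    linLoops N P = 0 ↔ NoR Adj P := by
  have hf : {i | Lp P i}.Finite := by
    refine (Set.finite_Icc 1 N).subset fun i hi => ?_
    have := Lp_range hP hi
    exact ⟨this.1, by omega⟩
  rw [noAdj_iff, linLoops, loopset hP, Set.ncard_eq_zero hf, Set.eq_empty_iff_forall_notMem]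
  rfl

lemma numA_zero (n : ℕ) : numA 3 n 0 = FF (Finset.Icc 1 (n * 3)) Adj := by
  classical
  rw [numA, FF, ← Set.ncard_coe_finset]
  congr 1
  ext P
  simp only [Set.mem_ofPred_eq, Finset.coe_filter, isLin_iff]
  exact and_congr_right fun h => loops_zero h

open Classical in
noncomputable def A1 (S : Finset ℕ) (i : ℕ) : ℕ :=
  ((TP S).filter (fun P => ∀ j, Lp P j ↔ j = i)).card

lemma numA_one (n : ℕ) : numA 3 n 1 = ∑ i ∈ Finset.Icc 1 (n * 3 - 1), A1 (Finset.Icc 1 (n * 3)) i := by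
  classical
  unfold A1
  rw [← Finset.card_biUnion, numA, ← Set.ncard_coe_finset]
  · congr 1
    ext P
    simp only [Set.mem_ofPred_eq, Finset.coe_biUnion, Finset.coe_filter, isLin_iff, Set.mem_iUnion,
      Finset.mem_coe]
    constructor
    · rintro ⟨h1, h2⟩
      rw [linLoops, loopset h1, Set.ncard_eq_one] at h2
      obtain ⟨i, hi⟩ := h2
      have hh : ∀ j, Lp P j ↔ j = i := fun j => by
        have := Set.ext_iff.1 hi j
        simpa using this
      have := Lp_range h1 ((hh i).2 rfl)
      exact ⟨i, Finset.mem_Icc.2 ⟨this.1, by omega⟩, h1, hh⟩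
    · rintro ⟨i, -, h1, hh⟩
      refine ⟨h1, ?_⟩
      rw [linLoops, loopset h1, Set.ncard_eq_one]
      exact ⟨i, by ext j; simp [hh]⟩
  · intro s hs t ht hst
    rw [Function.onFun, Finset.disjoint_left]
    intro P h1 h2
    simp only [Finset.mem_filter] at h1 h2
    exact hst ((h2.2 s).1 ((h1.2 s).2 rfl))

/-- the skip map -/
def sk (i j : ℕ) : ℕ := if j < i then j else j + 1

lemma sk_inj (i : ℕ) : Function.Injective (sk i) := by
  intro a b h
  unfold sk at h
  split_ifs at h <;> omega

lemma Lp_insert (b Q j) : Lp (insert b Q) j ↔ (j ∈ b ∧ j + 1 ∈ b) ∨ Lp Q j := by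
  simp [Lp]

noncomputable def GG (M u v : ℕ) : ℕ := FF ((Finset.Icc 1 M).erase u |>.erase v) Adj


lemma third {b : Finset ℕ} {x y : ℕ} (hb : b.card = 3) (hx : x ∈ b) (hy : y ∈ b) (hxy : x ≠ y) :
    ∃ z, z ≠ x ∧ z ≠ y ∧ b = {x, y, z} := by
  have h : ((b.erase x).erase y).card = 1 := by
    rw [Finset.card_erase_of_mem (Finset.mem_erase.2 ⟨hxy.symm, hy⟩),
      Finset.card_erase_of_mem hx, hb]
  obtain ⟨z, hz⟩ := Finset.card_eq_one.1 h
  have hz' : z ∈ (b.erase x).erase y := by rw [hz]; simp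
  simp only [Finset.mem_erase] at hz'
  refine ⟨z, hz'.2.1, hz'.1, ?_⟩
  rw [← Finset.insert_erase hx, ← Finset.insert_erase (Finset.mem_erase.2 ⟨hxy.symm, hy⟩), hz]

lemma A1_eq (M i : ℕ) (hi : i ∈ Finset.Icc 1 M) :
    A1 (Finset.Icc 1 (M + 1)) i =
      ∑ z ∈ (Finset.Icc 1 M).filter (fun z => i + 2 ≤ z ∨ z + 2 ≤ i), GG M i z := by
  classical
  rw [Finset.mem_Icc] at hi
  unfold A1
  rw [decomp _ ((Finset.Icc 1 M).filter (fun z => i + 2 ≤ z ∨ z + 2 ≤ i))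
    (fun z => ({i, i + 1, sk i z} : Finset ℕ))]
  · refine Finset.sum_congr rfl fun z hz => ?_
    simp only [Finset.mem_filter, Finset.mem_Icc] at hz
    rw [erase_count (q := NoR Adj)]
    · rw [GG, ← FF]
      symm
      refine FF_transport (sk i) (sk_inj i) _ _ _ _ ?_ ?_
      · ext x
        simp only [Finset.mem_image, Finset.mem_erase, Finset.mem_Icc, Finset.mem_sdiff,
          Finset.mem_insert, Finset.mem_singleton, sk]
        constructor
        · rintro ⟨a, ha, rfl⟩
          split_ifs <;> omega
        · intro h
          refine ⟨if x < i then x else x - 1, ?_, ?_⟩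
          · split_ifs at * <;> omega
          · split_ifs at * <;> omega
      · intro x hx y hy
        simp only [Finset.mem_erase] at hx hy
        unfold Adj sk
        split_ifs <;> omega
    · intro x
      simp only [Finset.mem_Icc, Finset.mem_insert, Finset.mem_singleton, sk]
      split_ifs <;> omega
    · apply Finset.card_eq_three.2
      refine ⟨_, _, _, ?_, ?_, ?_, rfl⟩ <;> (try unfold sk) <;> (try split_ifs) <;> omega
    · intro Q hQ
      rw [noAdj_iff]
      simp only [Lp_insert, Finset.mem_insert, Finset.mem_singleton]
      constructor
      · intro h j hj
        have h1 := (h j).1 (Or.inr hj)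
        subst h1
        obtain ⟨b, hb, h2, -⟩ := hj
        have := ((mem_TP.1 hQ).1 b hb).1 h2
        simp at this
      · intro h j
        simp only [h, or_false]
        unfold sk
        split_ifs <;> omega
  · intro P hP hL
    obtain ⟨b, hb, h1, h2⟩ := (hL i).2 rfl
    have hb' := (mem_TP.1 hP).1 b hb
    obtain ⟨y, hy1, hy2, rfl⟩ := third hb'.2 h1 h2 (by omega)
    have hy3 : y ≠ i + 2 := by
      rintro rfl
      have := (hL (i + 1)).1 ⟨_, hb, by simp, by simp⟩
      omega
    have hy4 : y + 1 ≠ i := by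
      rintro rfl
      have := (hL y).1 ⟨_, hb, by simp, by simp⟩
      omega
    have hy5 := Finset.mem_Icc.1 (hb'.1 (show y ∈ _ by simp))
    have hsk : sk i (if y < i then y else y - 1) = y := by
      unfold sk; split_ifs <;> omega
    refine ⟨if y < i then y else y - 1, ⟨?_, ?_⟩, ?_⟩
    · simp only [Finset.mem_filter, Finset.mem_Icc]
      split_ifs <;> omega
    · simp only [hsk]; exact hb
    · rintro z ⟨hz, hzP⟩
      have := TP_uniq hP hb hzP h1 (by simp)
      have hm : sk i z ∈ ({i, i + 1, y} : Finset ℕ) := by rw [this]; simp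
      simp only [Finset.mem_filter, Finset.mem_Icc] at hz
      simp only [Finset.mem_insert, Finset.mem_singleton] at hm
      apply sk_inj i
      rw [hsk]
      rcases hm with h | h | h
      · unfold sk at h; split_ifs at h <;> omega
      · unfold sk at h; split_ifs at h <;> omega
      · exact h

lemma A0_eq (M : ℕ) :
    FF (Finset.Icc 1 (M + 1)) Adj =
      ∑ t ∈ (Finset.Icc 1 M ×ˢ Finset.Icc 1 M).filter (fun t => t.1 + 2 ≤ t.2 ∧ t.2 ≠ M),
        GG M t.1 t.2 := by
  classical
  unfold FF
  rw [decomp _ ((Finset.Icc 1 M ×ˢ Finset.Icc 1 M).filter (fun t => t.1 + 2 ≤ t.2 ∧ t.2 ≠ M))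
    (fun t => ({M + 1, t.1, t.2} : Finset ℕ))]
  · refine Finset.sum_congr rfl fun t ht => ?_
    obtain ⟨u, v⟩ := t
    simp only [Finset.mem_filter, Finset.mem_Icc, Finset.mem_product] at ht
    simp only
    rw [erase_count (q := NoR Adj)]
    · rw [GG, ← FF]
      congr 1
      ext x
      simp only [Finset.mem_erase, Finset.mem_Icc, Finset.mem_sdiff,
          Finset.mem_insert, Finset.mem_singleton]
      omega
    · intro x
      simp only [Finset.mem_Icc, Finset.mem_insert, Finset.mem_singleton]
      omega
    · apply Finset.card_eq_three.2
      refine ⟨_, _, _, ?_, ?_, ?_, rfl⟩ <;> omega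
    · intro Q hQ
      rw [noAdj_iff, noAdj_iff]
      simp only [Lp_insert, Finset.mem_insert, Finset.mem_singleton]
      constructor
      · intro h j hj
        exact h j (Or.inr hj)
      · intro h j
        simp only [h, or_false]
        omega
  · intro P hP hL
    rw [noAdj_iff] at hL
    obtain ⟨b, ⟨hb, h1⟩, -⟩ := (mem_TP.1 hP).2 (M + 1) (by simp)
    have hb' := (mem_TP.1 hP).1 b hb
    have hex : ∃ u v, u < v ∧ v ≤ M ∧ b = {M + 1, u, v} := by
      obtain ⟨x, hx, hxM⟩ := Finset.exists_mem_ne (s := b) (by omega) (M + 1)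
      obtain ⟨y, hy1, hy2, rfl⟩ := third hb'.2 h1 hx hxM.symm
      have hx5 := Finset.mem_Icc.1 (hb'.1 hx)
      have hy5 := Finset.mem_Icc.1 (hb'.1 (show y ∈ _ by simp))
      rcases lt_or_gt_of_ne hy2 with h | h
      · exact ⟨y, x, h, by omega, by rw [Finset.pair_comm x y]⟩
      · exact ⟨x, y, h, by omega, rfl⟩
    obtain ⟨u, v, huv, hv, rfl⟩ := hex
    have hu5 := Finset.mem_Icc.1 (hb'.1 (show u ∈ _ by simp))
    have hv5 := Finset.mem_Icc.1 (hb'.1 (show v ∈ _ by simp))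
    have h3 : v ≠ u + 1 := by
      rintro rfl
      exact hL u ⟨_, hb, by simp, by simp⟩
    have h4 : v ≠ M := by
      rintro rfl
      exact hL v ⟨_, hb, by simp, by simp⟩
    refine ⟨(u, v), ⟨?_, hb⟩, ?_⟩
    · simp only [Finset.mem_filter, Finset.mem_Icc, Finset.mem_product]
      omega
    · rintro ⟨u', v'⟩ ⟨hz, hzP⟩
      have := TP_uniq hP hb hzP h1 (by simp)
      simp only [Finset.mem_filter, Finset.mem_Icc, Finset.mem_product] at hz
      have hm : u' ∈ ({M + 1, u, v} : Finset ℕ) := by rw [this]; simp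
      have hm' : v' ∈ ({M + 1, u, v} : Finset ℕ) := by rw [this]; simp
      simp only [Finset.mem_insert, Finset.mem_singleton] at hm hm'
      rw [Prod.mk.injEq]
      omega

lemma GG_last (K u : ℕ) (hu : u ∈ Finset.Icc 1 K) :
    GG (K + 2) u (K + 2) = FF (Finset.Icc 1 K) Adj + A1 (Finset.Icc 1 K) (u - 1) := by
  classical
  rw [Finset.mem_Icc] at hu
  have h1 : GG (K + 2) u (K + 2) = FF (Finset.Icc 1 K) (fun x y => y = x + 1 ∧ x + 1 ≠ u) := by
    symm
    refine FF_transport (sk u) (sk_inj u) _ _ _ _ ?_ ?_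
    · ext x
      simp only [Finset.mem_image, Finset.mem_erase, Finset.mem_Icc, sk]
      constructor
      · rintro ⟨a, ha, rfl⟩
        split_ifs <;> omega
      · intro h
        refine ⟨if x < u then x else x - 1, ?_, ?_⟩
        · split_ifs at * <;> omega
        · split_ifs at * <;> omega
    · intro x hx y hy
      unfold Adj sk
      split_ifs <;> omega
  rw [h1]
  unfold FF A1
  rw [← Finset.card_union_of_disjoint]
  · rw [← Finset.filter_or]
    congr 1
    refine Finset.filter_congr fun P hP => ?_
    have : NoR (fun x y => y = x + 1 ∧ x + 1 ≠ u) P ↔ ∀ j, Lp P j → j + 1 = u := by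
      constructor
      · rintro h j ⟨b, hb, h2, h3⟩
        by_contra hne
        exact h b hb j h2 _ h3 ⟨rfl, hne⟩
      · rintro h b hb x hx y hy ⟨rfl, hne⟩
        exact hne (h x ⟨b, hb, hx, hy⟩)
    rw [this, noAdj_iff]
    constructor
    · intro h
      by_cases hl : Lp P (u - 1)
      · right
        intro j
        constructor
        · intro hj; have := h j hj; omega
        · rintro rfl; exact hl
      · left
        intro j hj
        have := h j hj
        have h3 : j = u - 1 := by omega
        exact hl (h3 ▸ hj)
    · rintro (h | h) j hj
      · exact absurd hj (h j)
      · have := (h j).1 hj; omega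
  · rw [Finset.disjoint_left]
    intro P h2 h3
    simp only [Finset.mem_filter, noAdj_iff] at h2 h3
    exact h2.2 _ ((h3.2 _).2 rfl)

lemma A1_zero (K : ℕ) : A1 (Finset.Icc 1 K) 0 = 0 := by
  classical
  unfold A1
  rw [Finset.card_eq_zero, Finset.filter_eq_empty_iff]
  intro P hP h
  have := Lp_range hP ((h 0).2 rfl)
  omega

lemma GG_comm (M u v : ℕ) : GG M u v = GG M v u := by
  unfold GG; rw [Finset.erase_right_comm]

lemma numA_one_GG (M : ℕ) :
    ∑ i ∈ Finset.Icc 1 M, A1 (Finset.Icc 1 (M + 1)) i =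
      2 * ∑ t ∈ (Finset.Icc 1 M ×ˢ Finset.Icc 1 M).filter (fun t => t.1 + 2 ≤ t.2),
        GG M t.1 t.2 := by
  rw [Finset.sum_congr rfl (fun i hi => A1_eq M i hi)]
  simp only [Finset.sum_filter, Finset.sum_product]
  have h : ∀ i ∈ Finset.Icc 1 M, ∑ z ∈ Finset.Icc 1 M, (if i + 2 ≤ z ∨ z + 2 ≤ i then GG M i z else 0)
      = ∑ z ∈ Finset.Icc 1 M, (if i + 2 ≤ z then GG M i z else 0) +
        ∑ z ∈ Finset.Icc 1 M, (if z + 2 ≤ i then GG M z i else 0) := by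
    intro i _
    rw [← Finset.sum_add_distrib]
    refine Finset.sum_congr rfl fun z _ => ?_
    rw [GG_comm M z i]
    split_ifs <;> omega
  rw [Finset.sum_congr rfl h, Finset.sum_add_distrib, two_mul]
  congr 1
  rw [Finset.sum_comm]

lemma sum_split (K : ℕ) :
    ∑ t ∈ (Finset.Icc 1 (K + 2) ×ˢ Finset.Icc 1 (K + 2)).filter (fun t => t.1 + 2 ≤ t.2),
        GG (K + 2) t.1 t.2 =
    ∑ t ∈ (Finset.Icc 1 (K + 2) ×ˢ Finset.Icc 1 (K + 2)).filter
        (fun t => t.1 + 2 ≤ t.2 ∧ t.2 ≠ K + 2), GG (K + 2) t.1 t.2 +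
    ∑ u ∈ Finset.Icc 1 K, GG (K + 2) u (K + 2) := by
  rw [← Finset.sum_filter_add_sum_filter_not _ (fun t : ℕ × ℕ => t.2 ≠ K + 2),
    Finset.filter_filter]
  congr 1
  symm
  refine Finset.sum_bij (fun u _ => (u, K + 2)) ?_ ?_ ?_ ?_
  · intro u hu
    simp only [Finset.mem_filter, Finset.mem_Icc, Finset.mem_product] at *
    omega
  · intro a _ b _ h
    exact (Prod.mk.inj h).1
  · rintro ⟨u, v⟩ h
    simp only [Finset.mem_filter, Finset.mem_Icc, Finset.mem_product, not_not] at h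
    exact ⟨u, by rw [Finset.mem_Icc]; omega, by rw [h.2]⟩
  · intro u _
    rfl

lemma sum_shift (K : ℕ) :
    ∑ u ∈ Finset.Icc 1 K, A1 (Finset.Icc 1 K) (u - 1) =
      ∑ i ∈ Finset.Icc 1 (K - 1), A1 (Finset.Icc 1 K) i := by
  symm
  refine Finset.sum_of_injOn (fun i => i + 1) ?_ ?_ ?_ ?_
  · intro a _ b _ h
    simpa using h
  · intro a ha
    simp only [Finset.coe_Icc, Set.mem_Icc] at *
    omega
  · intro u hu h
    have : u = 1 := by
      by_contra hne
      apply h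
      refine ⟨u - 1, ?_, ?_⟩
      · simp only [Finset.coe_Icc, Set.mem_Icc, Finset.mem_Icc] at *; omega
      · simp only [Finset.mem_Icc] at *; omega
    subst this
    exact A1_zero K
  · intro i _
    simp

/-- for `d = 3` and `n ≥ 1`,
`a(n,1) = 2·a(n,0) + 2(3n−3)·a(n−1,0) + 2·a(n−1,1)`. -/
theorem linear_rec_three_one (n : ℕ) (hn : 1 ≤ n) :
    numA 3 n 1 = 2 * numA 3 n 0 + 2 * (3 * n - 3) * numA 3 (n - 1) 0 +
      2 * numA 3 (n - 1) 1 := by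
  obtain ⟨m, rfl⟩ : ∃ m, n = m + 1 := ⟨n - 1, by omega⟩
  have e1 : (m + 1) * 3 = m * 3 + 2 + 1 := by ring
  have e2 : 3 * (m + 1) - 3 = m * 3 := by omega
  rw [Nat.add_sub_cancel, numA_one (m + 1), numA_one m, numA_zero, numA_zero, e1, e2,
    Nat.add_sub_cancel, numA_one_GG, A0_eq, sum_split,
    Finset.sum_congr rfl (fun u hu => GG_last (m * 3) u hu), Finset.sum_add_distrib, sum_shift,
    Finset.sum_const, Nat.card_Icc, smul_eq_mul, Nat.add_sub_cancel]
  ring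
end
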